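/- arXiv:1602.01337 — 4 statements merged into one kernel-verified Lean document; each statement's English description precedes it below -/
import Mathlib

section
/- Let m = p_1^{α_1} p_2^{α_2} ⋯ p_k^{α_k} be the prime factorization of an odd number m ≥ 3, where p_1,…,p_k are distinct odd primes. Then for every positive integer n the crown C_m ⊙ K̄_n admits edge-magic labelings realizing at least (1 + α_1 + ⋯ + α_k)(n+1) mutually different valences. -/
/-- An edge-magic labeling of a finite graph presented by an endpoint map
`ends : E → V × V` (loops and multiple edges allowed): the vertex labels `fv`
and edge labels `fe` together form a bijection onto `{1, …, |V| + |E|}` and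
every edge `e` satisfies `fv (ends e).1 + fe e + fv (ends e).2 = k`.
The constant `k` is the valence. -/
def IsEdgeMagic {V E : Type} [Fintype V] [Fintype E] (ends : E → V × V)
    (fv : V → ℕ) (fe : E → ℕ) (k : ℕ) : Prop :=
  Function.Injective (Sum.elim fv fe) ∧
  Set.range (Sum.elim fv fe) = Set.Icc 1 (Fintype.card V + Fintype.card E) ∧
  ∀ e : E, fv (ends e).1 + fe e + fv (ends e).2 = k

/-- A super edge-magic labeling: edge-magic, and moreover the vertex labels
are exactly `{1, …, |V|}`. -/
def IsSuperEdgeMagic {V E : Type} [Fintype V] [Fintype E] (ends : E → V × V)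
    (fv : V → ℕ) (fe : E → ℕ) (k : ℕ) : Prop :=
  IsEdgeMagic ends fv fe k ∧ Set.range fv = Set.Icc 1 (Fintype.card V)

/-- The cycle `C_m`: vertices `Fin m`, edge `i` joins `i` to `i+1 (mod m)`. -/
def cycleEnds (m : ℕ) : Fin m → Fin m × Fin m :=
  fun i => (i, ⟨(i.val + 1) % m, Nat.mod_lt _ i.pos⟩)

/-- The crown `C_m ⊙ K̄_n`: vertices are `Sum.inl i` (cycle vertices `v_i`) and
`Sum.inr (i, j)` (pendant vertices `v_i^j`); edges are the `m` cycle edges and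
the `m * n` pendant edges. -/
def crownEnds (m n : ℕ) :
    (Fin m ⊕ Fin m × Fin n) → (Fin m ⊕ Fin m × Fin n) × (Fin m ⊕ Fin m × Fin n)
  | Sum.inl i => (Sum.inl i, Sum.inl ⟨(i.val + 1) % m, Nat.mod_lt _ i.pos⟩)
  | Sum.inr p => (Sum.inl p.1, Sum.inr p)

/-- The graph `K_{1,n}^l`: the star `K_{1,n}` (center `none`, leaves `some j`)
with a loop (edge `none`) attached at the center. -/
def starLoopEnds (n : ℕ) : Option (Fin n) → Option (Fin n) × Option (Fin n)
  | none => (none, none)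
  | some j => (none, some j)

/-!
The crown `C_m ⊙ K̄_n` is a `⊗_h`-product of the cycle `C_m` with the looped star `K_{1,n}^l`, and
for odd `d` the cycle `C_{rd}` is a `⊗_h`-product of `C_r` with `C_d`: a walk around `C_{rd}`
repeatedly zigzags along an edge of `C_r` while it runs around `C_d`. An edge-magic labeling of the
first factor and a super edge-magic labeling of the second combine, as lower and higher digit of a
number, to an edge-magic labeling of the product whose valence is explicit. Every divisor `r` of
an odd `m` thus gives a valence `3m + 1 - ⌊r/2⌋` of `C_m`. The looped star has `n + 1` super
edge-magic valences, one for each label of its center; they shift a valence of `C_m` by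
`2m(n + c)`, `0 ≤ c ≤ n`, and no two valences of `C_m` are `2m` or more apart.
-/

theorem eq_and_eq_of_add_mul_eq {M x x' q q' : ℕ} (hlt : x < x' + M) (hlt' : x' < x + M)
    (h : x + M * q = x' + M * q') : x = x' ∧ q = q' := by
  rcases lt_trichotomy q q' with hq | rfl | hq
  · have := Nat.mul_le_mul_left M (Nat.succ_le_of_lt hq)
    rw [Nat.mul_succ] at this
    omega
  · exact ⟨Nat.add_right_cancel h, rfl⟩
  · have := Nat.mul_le_mul_left M (Nat.succ_le_of_lt hq)
    rw [Nat.mul_succ] at this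
    omega

theorem range_eq_Icc_one_card {α : Type*} [Fintype α] {f : α → ℕ} (hf : Function.Injective f)
    (hmem : ∀ a, f a ∈ Set.Icc 1 (Fintype.card α)) :
    Set.range f = Set.Icc 1 (Fintype.card α) := by
  refine Set.eq_of_subset_of_ncard_le (Set.range_subset_iff.2 hmem) ?_ (Set.finite_Icc _ _)
  rw [Set.ncard_range_of_injective hf, Nat.card_eq_fintype_card, Set.ncard_eq_toFinset_card']
  simp

theorem isEdgeMagic_of_injective {V E : Type} [Fintype V] [Fintype E] {ends : E → V × V}
    {fv : V → ℕ} {fe : E → ℕ} {k : ℕ} (hinj : Function.Injective (Sum.elim fv fe))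
    (hmem : ∀ x, Sum.elim fv fe x ∈ Set.Icc 1 (Fintype.card V + Fintype.card E))
    (hval : ∀ e, fv (ends e).1 + fe e + fv (ends e).2 = k) : IsEdgeMagic ends fv fe k := by
  rw [← Fintype.card_sum] at hmem
  exact ⟨hinj, by rw [range_eq_Icc_one_card hinj hmem, Fintype.card_sum], hval⟩

theorem exists_isSuperEdgeMagic_of_consecutive_sums {V E : Type} [Fintype V] [Fintype E]
    {ends : E → V × V} {fv : V → ℕ} {s : ℕ} (hinj : Function.Injective fv)
    (hmem : ∀ v, fv v ∈ Set.Icc 1 (Fintype.card V))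
    (hsum : Function.Injective fun e => fv (ends e).1 + fv (ends e).2)
    (hsum_mem : ∀ e, fv (ends e).1 + fv (ends e).2 ∈ Set.Ico s (s + Fintype.card E)) :
    ∃ fe, IsSuperEdgeMagic ends fv fe (Fintype.card V + Fintype.card E + s) := by
  set fe := fun e => Fintype.card V + Fintype.card E + s - (fv (ends e).1 + fv (ends e).2)
  simp only [Set.mem_Ico] at hsum_mem
  have edge_injective : Function.Injective fe := fun e e' h => hsum (by grind)
  have edge_mem (e) : fe e ∈ Set.Ioc (Fintype.card V) (Fintype.card V + Fintype.card E) := by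
    grind
  have vertex_ne_edge (v e) : fv v ≠ fe e := ((hmem v).2.trans_lt (edge_mem e).1).ne
  refine ⟨fe, isEdgeMagic_of_injective (hinj.sumElim edge_injective vertex_ne_edge) ?_
    fun e => ?_, range_eq_Icc_one_card hinj hmem⟩
  · rintro (v | e)
    exacts [⟨(hmem v).1, (hmem v).2.trans (Nat.le_add_right _ _)⟩,
      ⟨Nat.one_le_of_lt (edge_mem e).1, (edge_mem e).2⟩]
  · grind

namespace IsEdgeMagic

variable {V E : Type} [Fintype V] [Fintype E] {ends : E → V × V} {fv : V → ℕ} {fe : E → ℕ} {k : ℕ}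

theorem vertex_mem_Icc (h : IsEdgeMagic ends fv fe k) (v : V) :
    fv v ∈ Set.Icc 1 (Fintype.card V + Fintype.card E) :=
  h.2.1 ▸ Set.mem_range_self (Sum.inl v)

theorem edge_mem_Icc (h : IsEdgeMagic ends fv fe k) (e : E) :
    fe e ∈ Set.Icc 1 (Fintype.card V + Fintype.card E) :=
  h.2.1 ▸ Set.mem_range_self (Sum.inr e)

theorem vertex_injective (h : IsEdgeMagic ends fv fe k) : Function.Injective fv :=
  h.1.comp Sum.inl_injective

theorem edge_injective (h : IsEdgeMagic ends fv fe k) : Function.Injective fe :=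
  h.1.comp Sum.inr_injective

theorem vertex_ne_edge (h : IsEdgeMagic ends fv fe k) (v : V) (e : E) : fv v ≠ fe e :=
  fun heq => Sum.inl_ne_inr (h.1 heq)

theorem sum_labels_mul_two (h : IsEdgeMagic ends fv fe k) :
    (∑ v, fv v + ∑ e, fe e) * 2 =
      (Fintype.card V + Fintype.card E) * (Fintype.card V + Fintype.card E + 1) := by
  have himage : Finset.univ.image (Sum.elim fv fe) =
      Finset.Ico 1 (Fintype.card V + Fintype.card E + 1) := by
    rw [← Finset.coe_inj, Finset.coe_image, Finset.coe_univ, Set.image_univ, h.2.1,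
      Finset.coe_Ico, Set.Ico_add_one_right_eq_Icc]
  calc (∑ v, fv v + ∑ e, fe e) * 2
      = (∑ i ∈ Finset.univ.image (Sum.elim fv fe), i) * 2 := by
        rw [Finset.sum_image h.1.injOn, Fintype.sum_sum_type]
        rfl
    _ = (∑ i ∈ Finset.range (Fintype.card V + Fintype.card E + 1), i) * 2 := by
        rw [himage, Finset.range_eq_Ico, Finset.sum_eq_sum_Ico_succ_bot (Nat.succ_pos _), zero_add]
    _ = (Fintype.card V + Fintype.card E) * (Fintype.card V + Fintype.card E + 1) := by
        rw [Finset.sum_range_id_mul_two, Nat.add_sub_cancel, mul_comm]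

end IsEdgeMagic

namespace IsSuperEdgeMagic

variable {V E : Type} [Fintype V] [Fintype E] {ends : E → V × V} {fv : V → ℕ} {fe : E → ℕ} {k : ℕ}

theorem vertex_mem_Icc (h : IsSuperEdgeMagic ends fv fe k) (v : V) :
    fv v ∈ Set.Icc 1 (Fintype.card V) :=
  h.2 ▸ Set.mem_range_self v

theorem card_lt_edge (h : IsSuperEdgeMagic ends fv fe k) (e : E) : Fintype.card V < fe e := by
  by_contra! hle
  obtain ⟨v, hv⟩ : fe e ∈ Set.range fv := h.2 ▸ ⟨(h.1.edge_mem_Icc e).1, hle⟩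
  exact h.1.vertex_ne_edge v e hv

end IsSuperEdgeMagic

/-- A presentation of the graph `ends` as a product `D ⊗_h Γ`, where the digraph `D` is `ends₂`
and `h` assigns to every arc of `D` an orientation of the graph `ends₁`. The orientations stay
implicit: `fst_ends` only asks that first components of endpoints form an edge of `ends₁`, in
either order. -/
structure HProduct {V₁ E₁ V₂ E₂ V E : Type} (ends₁ : E₁ → V₁ × V₁) (ends₂ : E₂ → V₂ × V₂)
    (ends : E → V × V) where
  vert : V ≃ V₁ × V₂
  edge : E ≃ E₁ × E₂
  fst_ends : ∀ e, s((vert (ends e).1).1, (vert (ends e).2).1) =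
    s((ends₁ (edge e).1).1, (ends₁ (edge e).1).2)
  snd_ends : ∀ e, ((vert (ends e).1).2, (vert (ends e).2).2) = ends₂ (edge e).2

namespace HProduct

variable {V₁ E₁ V₂ E₂ V E : Type} {ends₁ : E₁ → V₁ × V₁} {ends₂ : E₂ → V₂ × V₂}
  {ends : E → V × V}

theorem apply_fst_add_apply_fst (P : HProduct ends₁ ends₂ ends) (f : V₁ → ℕ) (e : E) :
    f (P.vert (ends e).1).1 + f (P.vert (ends e).2).1 =
      f (ends₁ (P.edge e).1).1 + f (ends₁ (P.edge e).1).2 := by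
  rcases Sym2.eq_iff.1 (P.fst_ends e) with ⟨h, h'⟩ | ⟨h, h'⟩
  · rw [h, h']
  · rw [h, h', add_comm]

variable [Fintype V₁] [Fintype E₁] [Fintype V₂] [Fintype E₂] [Fintype V] [Fintype E]

theorem card_add_card (P : HProduct ends₁ ends₂ ends)
    (hcard : Fintype.card V₂ = Fintype.card E₂) :
    Fintype.card V + Fintype.card E =
      (Fintype.card V₁ + Fintype.card E₁) * Fintype.card V₂ := by
  rw [Fintype.card_congr P.vert, Fintype.card_congr P.edge, Fintype.card_prod, Fintype.card_prod,
    ← hcard, ← add_mul]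

-- The labels of the second factor become digits starting at `0`: vertex labels are lowered by `1`
-- and edge labels by `|V₂| + 1`, so the digits along every edge add up to `l - (|V₂| + 3)`.
theorem exists_isEdgeMagic (P : HProduct ends₁ ends₂ ends)
    (hcard : Fintype.card V₂ = Fintype.card E₂) {fv₁ : V₁ → ℕ} {fe₁ : E₁ → ℕ} {k : ℕ}
    (h₁ : IsEdgeMagic ends₁ fv₁ fe₁ k) {fv₂ : V₂ → ℕ} {fe₂ : E₂ → ℕ} {l : ℕ}
    (h₂ : IsSuperEdgeMagic ends₂ fv₂ fe₂ l) :
    ∃ fv fe, IsEdgeMagic ends fv fe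
      (k + (Fintype.card V₁ + Fintype.card E₁) * (l - (Fintype.card V₂ + 3))) := by
  set M := Fintype.card V₁ + Fintype.card E₁
  set N := Fintype.card V₂
  have hv₁ (x) : 1 ≤ fv₁ x ∧ fv₁ x ≤ M := h₁.vertex_mem_Icc x
  have he₁ (x) : 1 ≤ fe₁ x ∧ fe₁ x ≤ M := h₁.edge_mem_Icc x
  have hv₂ (y) : 1 ≤ fv₂ y ∧ fv₂ y ≤ N := h₂.vertex_mem_Icc y
  have he₂ (y) : N < fe₂ y ∧ fe₂ y ≤ N + N :=
    ⟨h₂.card_lt_edge y, by have := (h₂.1.edge_mem_Icc y).2; omega⟩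
  have digits_mem {x q : ℕ} (hx : 1 ≤ x ∧ x ≤ M) (hq : q < N) : x + M * q ∈ Set.Icc 1 (M * N) :=
    ⟨by omega, by nlinarith⟩
  refine ⟨fun v => fv₁ (P.vert v).1 + M * (fv₂ (P.vert v).2 - 1),
    fun e => fe₁ (P.edge e).1 + M * (fe₂ (P.edge e).2 - (N + 1)),
    isEdgeMagic_of_injective (.sumElim (fun v v' h => ?_) (fun e e' h => ?_) fun v e h => ?_) ?_
      fun e => ?_⟩
  · obtain ⟨hx, hy⟩ := eq_and_eq_of_add_mul_eq (by grind) (by grind) h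
    refine P.vert.injective (Prod.ext (h₁.vertex_injective hx) (h₂.1.vertex_injective ?_))
    grind
  · obtain ⟨hx, hy⟩ := eq_and_eq_of_add_mul_eq (by grind) (by grind) h
    refine P.edge.injective (Prod.ext (h₁.edge_injective hx) (h₂.1.edge_injective ?_))
    grind
  · exact h₁.vertex_ne_edge _ _ (eq_and_eq_of_add_mul_eq (by grind) (by grind) h).1
  · rw [P.card_add_card hcard]
    rintro (v | e)
    exacts [digits_mem (hv₁ _) (by grind), digits_mem (he₁ _) (by grind)]
  · have fst_sum : fv₁ (P.vert (ends e).1).1 + fe₁ (P.edge e).1 +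
        fv₁ (P.vert (ends e).2).1 = k := by
      rw [← h₁.2.2 (P.edge e).1, add_right_comm, P.apply_fst_add_apply_fst, add_right_comm]
    have snd_sum :
        (fv₂ (P.vert (ends e).1).2 - 1) + (fe₂ (P.edge e).2 - (N + 1)) +
          (fv₂ (P.vert (ends e).2).2 - 1) = l - (N + 3) := by
      have := h₂.1.2.2 (P.edge e).2
      rw [← P.snd_ends e] at this
      grind
    rw [← fst_sum, ← snd_sum]
    ring

end HProduct

theorem cycleEnds_eq_finRotate {m : ℕ} (i : Fin m) : cycleEnds m i = (i, finRotate m i) := by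
  have := i.neZero
  rw [finRotate_apply, cycleEnds, Prod.mk.injEq]
  exact ⟨rfl, Fin.ext (by simp [Fin.val_add])⟩

theorem val_finRotate {m : ℕ} (i : Fin m) :
    (finRotate m i : ℕ) = if (i : ℕ) + 1 = m then 0 else (i : ℕ) + 1 := by
  cases m with
  | zero => exact i.elim0
  | succ m => simp only [coe_finRotate, Fin.ext_iff, Fin.val_last, Nat.add_right_cancel_iff]

/-- The crown `C_m ⊙ K̄_n` as the `⊗_h`-product of `C_m` with `K_{1,n}^l`. The pendant vertices
at `v_i` are placed over `i + 1`, so that all edges starting at `v_i` project to the cycle edge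
from `i` to `i + 1`. -/
def crownHProduct (m n : ℕ) : HProduct (cycleEnds m) (starLoopEnds n) (crownEnds m n) :=
  let split : Fin m ⊕ Fin m × Fin n ≃ Fin m × Option (Fin n) :=
    ((Equiv.refl _).sumCongr (.prodComm _ _)).trans (optionProdEquiv.symm.trans (.prodComm _ _))
  { vert := ((Equiv.refl _).sumCongr ((finRotate m).prodCongr (.refl _))).trans split
    edge := split
    fst_ends := by
      rintro (i | ⟨i, j⟩)
      · rfl
      · rw [cycleEnds_eq_finRotate]
        rfl
    snd_ends := by rintro (i | ⟨i, j⟩) <;> rfl }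

theorem exists_isSuperEdgeMagic_starLoopEnds {n : ℕ} (c : Fin (n + 1)) :
    ∃ fv fe, IsSuperEdgeMagic (starLoopEnds n) fv fe (2 * n + 4 + c) := by
  let label : Option (Fin n) ≃ Fin (n + 1) := (finSuccEquiv' c).symm
  have ends_sum (e) : (label (starLoopEnds n e).1 + 1 : ℕ) + (label (starLoopEnds n e).2 + 1) =
      c + 2 + label e := by
    have label_none : label none = c := finSuccEquiv'_symm_none c
    cases e <;> simp only [starLoopEnds, label_none] <;> ring
  obtain ⟨fe, h⟩ := exists_isSuperEdgeMagic_of_consecutive_sums (ends := starLoopEnds n)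
    (fv := fun v => label v + 1) (s := c + 2) (fun v w h => label.injective (by grind))
    (fun v => by simpa using (label v).is_le) (fun e e' h => label.injective (by grind))
    (fun e => by simpa [ends_sum] using (label e).is_le)
  refine ⟨fun v => label v + 1, fe, ?_⟩
  convert h using 1
  simp only [Fintype.card_option, Fintype.card_fin]
  ring

theorem exists_isSuperEdgeMagic_cycleEnds (b : ℕ) :
    ∃ fv fe, IsSuperEdgeMagic (cycleEnds (2 * b + 1)) fv fe (5 * b + 4) := by
  -- `half` is multiplication by `1 / 2` modulo `2 * b + 1`, so neighbours `i` and `i + 1` have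
  -- labels adding up to `i + 1`, up to a constant.
  let half (i : ℕ) : ℕ := if Even i then i / 2 else (i + (2 * b + 1)) / 2
  have ends_sum (i : Fin (2 * b + 1)) :
      half (cycleEnds (2 * b + 1) i).1 + 1 + (half (cycleEnds (2 * b + 1) i).2 + 1) =
        b + 2 + finRotate (2 * b + 1) i := by
    simp only [cycleEnds_eq_finRotate, val_finRotate, half]
    grind
  obtain ⟨fe, h⟩ := exists_isSuperEdgeMagic_of_consecutive_sums (ends := cycleEnds (2 * b + 1))
    (fv := fun i => half i + 1) (s := b + 2) (fun i j h => by grind)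
    (fun i => by rw [Fintype.card_fin, Set.mem_Icc]; grind)
    (fun i j h => (finRotate _).injective (by grind))
    (fun i => by rw [ends_sum, Fintype.card_fin, Set.mem_Ico]; omega)
  refine ⟨fun i => half i + 1, fe, ?_⟩
  convert h using 1
  rw [Fintype.card_fin]
  ring

theorem finRotate_finProdFinEquiv {r d : ℕ} (x : Fin r) (y : Fin d) :
    finRotate (r * d) (finProdFinEquiv (x, y)) =
      finProdFinEquiv (if (y : ℕ) + 1 = d then finRotate r x else x, finRotate d y) := by
  have last_iff : (y + d * x + 1 : ℕ) = r * d ↔ (x : ℕ) + 1 = r ∧ (y : ℕ) + 1 = d := by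
    constructor
    · intro h
      obtain ⟨s, rfl⟩ : ∃ s, r = s + 1 := ⟨r - 1, by have := x.isLt; omega⟩
      obtain ⟨hy, hx⟩ := eq_and_eq_of_add_mul_eq (x := y + 1) (x' := d) (q := x) (q' := s)
        (M := d) (by omega) (by omega) (by linarith)
      exact ⟨congrArg (· + 1) hx, hy⟩
    · rintro ⟨hx, hy⟩
      calc (y + d * x + 1 : ℕ) = (x + 1) * d := by linarith
        _ = r * d := by rw [hx]
  ext
  simp only [finProdFinEquiv_apply_val, val_finRotate, last_iff]
  split_ifs <;> grind [val_finRotate]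

/-- For odd `d`, the cycle `C_{rd}` as a `⊗_h`-product of `C_r` with `C_d`. The vertex with
quotient `x` and remainder `y` by `d` is placed over `x` for even `y` and over `x + 1` for odd `y`;
since `d - 1` is even, the walk then moves from `x` to `x + 1` when the quotient changes. -/
def cycleHProduct (r : ℕ) {d : ℕ} (hd : Odd d) :
    HProduct (cycleEnds r) (cycleEnds d) (cycleEnds (r * d)) where
  vert := (finProdFinEquiv.symm.trans (.prodComm _ _)).trans <|
    ((Equiv.refl _).prodShear fun y : Fin d =>
      if Even (y : ℕ) then .refl _ else finRotate r).trans (.prodComm _ _)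
  edge := finProdFinEquiv.symm
  fst_ends e := by
    obtain ⟨⟨x, y⟩, rfl⟩ := finProdFinEquiv.surjective e
    have := val_finRotate y
    simp only [cycleEnds_eq_finRotate, finRotate_finProdFinEquiv, Equiv.trans_apply,
      Equiv.symm_apply_apply, Equiv.prodComm_apply, Prod.swap_prod_mk, Equiv.prodShear_apply,
      Equiv.refl_apply, Sym2.eq_iff]
    rcases eq_or_ne ((y : ℕ) + 1) d with last | not_last
    · have y_even : Even (y : ℕ) := by grind
      grind
    · grind
  snd_ends e := by
    obtain ⟨⟨x, y⟩, rfl⟩ := finProdFinEquiv.surjective e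
    simp [cycleEnds_eq_finRotate, finRotate_finProdFinEquiv, -finRotate_apply]

theorem exists_isEdgeMagic_cycleEnds_of_dvd {m r : ℕ} (hodd : Odd m) (hr : r ∣ m) :
    ∃ fv fe, IsEdgeMagic (cycleEnds m) fv fe (3 * m + 1 - r / 2) := by
  obtain ⟨d, rfl⟩ := hr
  obtain ⟨hr, hd⟩ := Nat.odd_mul.1 hodd
  obtain ⟨a, rfl⟩ := hr
  obtain ⟨b, rfl⟩ := id hd
  obtain ⟨fv₁, fe₁, h₁⟩ := exists_isSuperEdgeMagic_cycleEnds a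
  obtain ⟨fv₂, fe₂, h₂⟩ := exists_isSuperEdgeMagic_cycleEnds b
  convert (cycleHProduct (2 * a + 1) hd).exists_isEdgeMagic rfl h₁.1 h₂ using 5
  rw [Fintype.card_fin, Fintype.card_fin, show 5 * b + 4 - (2 * b + 1 + 3) = 3 * b by omega,
    show (2 * a + 1) / 2 = a by omega]
  apply Nat.sub_eq_of_eq_add
  ring

theorem IsEdgeMagic.exists_crownEnds {m n k : ℕ} {fv fe : Fin m → ℕ}
    (h : IsEdgeMagic (cycleEnds m) fv fe k) (c : Fin (n + 1)) :
    ∃ gv ge, IsEdgeMagic (crownEnds m n) gv ge (k + 2 * m * (n + c)) := by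
  obtain ⟨fv₂, fe₂, h₂⟩ := exists_isSuperEdgeMagic_starLoopEnds c
  convert (crownHProduct m n).exists_isEdgeMagic rfl h h₂ using 5
  rw [Fintype.card_fin, Fintype.card_option, Fintype.card_fin, ← two_mul,
    show 2 * n + 4 + c - (n + 1 + 3) = n + c by omega]

theorem IsEdgeMagic.valence_mem_Ioo_of_cycleEnds {m k : ℕ} {fv fe : Fin m → ℕ} (hm : 0 < m)
    (h : IsEdgeMagic (cycleEnds m) fv fe k) : k ∈ Set.Ioo (2 * m + 1) (4 * m + 2) := by
  have : Nonempty (Fin m) := ⟨0, hm⟩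
  have sum_valence : ∑ i, fv i + ∑ i, fe i + ∑ i, fv i = m * k := by
    calc ∑ i, fv i + ∑ i, fe i + ∑ i, fv i
        = ∑ i, fv i + ∑ i, fe i + ∑ i, fv (finRotate m i) := by
          rw [Equiv.sum_comp (finRotate m) fv]
      _ = ∑ i, (fv (cycleEnds m i).1 + fe i + fv (cycleEnds m i).2) := by
          simp only [Finset.sum_add_distrib, cycleEnds_eq_finRotate]
      _ = m * k := by simp [h.2.2]
  have sum_labels : ∑ i, fv i + ∑ i, fe i = m * (2 * m + 1) := by
    have := h.sum_labels_mul_two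
    rw [Fintype.card_fin] at this
    linarith
  have vertex_pos : 0 < ∑ i, fv i :=
    Finset.sum_pos (fun i _ => (h.vertex_mem_Icc i).1) Finset.univ_nonempty
  have edge_pos : 0 < ∑ i, fe i :=
    Finset.sum_pos (fun i _ => (h.edge_mem_Icc i).1) Finset.univ_nonempty
  constructor <;> nlinarith

theorem exists_crownEnds_valences {m : ℕ} (hm : 0 < m) (n : ℕ) {K : Finset ℕ}
    (hK : ∀ k ∈ K, ∃ fv fe, IsEdgeMagic (cycleEnds m) fv fe k) :
    ∃ S : Finset ℕ, S.card = K.card * (n + 1) ∧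
      ∀ k ∈ S, ∃ fv fe, IsEdgeMagic (crownEnds m n) fv fe k := by
  have valence_mem (k) (hk : k ∈ K) : k ∈ Set.Ioo (2 * m + 1) (4 * m + 2) := by
    obtain ⟨fv, fe, h⟩ := hK k hk
    exact h.valence_mem_Ioo_of_cycleEnds hm
  have inj : Set.InjOn (fun p : ℕ × Fin (n + 1) => p.1 + 2 * m * (n + p.2))
      (K ×ˢ Finset.univ : Finset (ℕ × Fin (n + 1))) := by
    rintro ⟨k, c⟩ hk ⟨k', c'⟩ hk' h
    have hkK := valence_mem k (Finset.mem_product.1 hk).1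
    have hkK' := valence_mem k' (Finset.mem_product.1 hk').1
    obtain ⟨rfl, hc⟩ := eq_and_eq_of_add_mul_eq (by grind) (by grind) h
    exact Prod.ext rfl (Fin.ext (Nat.add_left_cancel hc))
  refine ⟨(K ×ˢ Finset.univ).image fun p : ℕ × Fin (n + 1) => p.1 + 2 * m * (n + p.2), ?_, ?_⟩
  · rw [Finset.card_image_of_injOn inj, Finset.card_product, Finset.card_fin]
  · simp only [Finset.mem_image, Finset.mem_product, Finset.mem_univ, and_true]
    rintro _ ⟨⟨k, c⟩, hk, rfl⟩
    obtain ⟨fv, fe, h⟩ := hK k hk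
    exact h.exists_crownEnds c

theorem one_add_sum_le_prod_add_one {ι : Type*} (s : Finset ι) (f : ι → ℕ) :
    1 + ∑ i ∈ s, f i ≤ ∏ i ∈ s, (f i + 1) := by
  induction s using Finset.cons_induction with
  | empty => simp
  | cons i s hi ih =>
    rw [Finset.sum_cons, Finset.prod_cons]
    have : 1 ≤ ∏ j ∈ s, (f j + 1) := by omega
    nlinarith

theorem one_add_sum_factorization_le_card_divisors {m : ℕ} (hm : m ≠ 0) :
    1 + (m.factorization.sum fun _ e => e) ≤ m.divisors.card := by
  rw [Nat.card_divisors hm]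
  exact one_add_sum_le_prod_add_one _ _

theorem crown_odd_valences_lowerBound_general (m n : ℕ) (hodd : Odd m) :
    ∃ S : Finset ℕ, S.card = m.divisors.card * (n + 1) ∧
      ∀ k ∈ S, ∃ fv fe, IsEdgeMagic (crownEnds m n) fv fe k := by
  have inj : Set.InjOn (fun r => 3 * m + 1 - r / 2) m.divisors := by
    intro r hr r' hr' h
    have odd_le {s} (hs : s ∈ m.divisors) : Odd s ∧ s ≤ m :=
      ⟨hodd.of_dvd_nat (Nat.dvd_of_mem_divisors hs), Nat.divisor_le hs⟩
    have := odd_le hr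
    have := odd_le hr'
    grind
  rw [← Finset.card_image_of_injOn inj]
  refine exists_crownEnds_valences hodd.pos n fun k hk => ?_
  obtain ⟨r, hr, rfl⟩ := Finset.mem_image.1 hk
  exact exists_isEdgeMagic_cycleEnds_of_dvd hodd (Nat.dvd_of_mem_divisors hr)

/-- for odd m ≥ 3 with Ω(m) = α₁+⋯+α_k prime factors counted
with multiplicity, the crown C_m ⊙ K̄_n admits at least (1 + Ω(m))(n+1)
mutually different edge-magic valences. -/
theorem crown_odd_valences_lowerBound (m n : ℕ) (hm : 3 ≤ m) (hodd : Odd m)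
    (hn : 1 ≤ n) :
    ∃ S : Finset ℕ,
      (1 + m.factorization.sum fun _ e => e) * (n + 1) ≤ S.card ∧
      ∀ k ∈ S, ∃ fv fe, IsEdgeMagic (crownEnds m n) fv fe k := by
  obtain ⟨S, hcard, hS⟩ := crown_odd_valences_lowerBound_general m n hodd
  exact ⟨S, hcard ▸ Nat.mul_le_mul_right _
    (one_add_sum_factorization_le_card_divisors hodd.pos.ne'), hS⟩
end

section
/- Let m = p^k where p > 2 is a prime number and k is a positive integer, and let n be a positive integer. Then the crown C_m ⊙ K̄_n is perfect super edge-magic: for every integer j with 2mn + (5m+3)/2 ≤ j ≤ 3mn + (5m+3)/2 there exists a super edge-magic labeling of C_m ⊙ K̄_n with valence j. -/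
/-!
The labels are consecutive on the cycle, `t + 1, …, t + m`, and the pendant vertices receive the
other labels of `{1, …, m (n + 1)}`. With the usual labelling of an odd cycle the cycle edges have
consecutive sums, and the pendant sums fill the rest of an interval of length `m (n + 1)` as soon
as, writing `m = 2 h + 1`, some permutation of `[0, m)` takes every displacement in `[-h, h]`
exactly once and preserves the initial segment `[0, t % m)`. Shifting `t` through `0, …, m n` then
yields every valence.

Such permutations exist for every initial segment `[0, a)`, by induction on `h`: once the extreme
displacements are spent on an outer part of the longer of the two intervals `[0, a)` and `[a, m)`,
what remains is the same problem for a smaller `h`. If the lengths are comparable, two end blocks of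
the longer interval are exchanged; otherwise a Langford-type permutation whose displacements are
`±(s + 1), …, ±(s + g)`, with `g` about `2 s`, is split off.
-/

open Set

section DifferenceMatching

/-- `f` restricts to an injection of `S` into `T` whose displacements `f x - x` are pairwise
distinct elements of `D`. The map is total on `ℤ`, with irrelevant values off `S`. -/
structure IsDifferenceMatching (f : ℤ → ℤ) (S T D : Set ℤ) : Prop where
  mapsTo : MapsTo f S T
  injOn : InjOn f S
  mapsTo_sub : MapsTo (fun x => f x - x) S D
  injOn_sub : InjOn (fun x => f x - x) S

namespace IsDifferenceMatching

variable {f f' : ℤ → ℤ} {S S' T T' D D' : Set ℤ}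

theorem mono (hf : IsDifferenceMatching f S T D) (hS : S' ⊆ S) (hT : T ⊆ T') (hD : D ⊆ D') :
    IsDifferenceMatching f S' T' D' :=
  ⟨hf.mapsTo.mono hS hT, hf.injOn.mono hS, hf.mapsTo_sub.mono hS hD, hf.injOn_sub.mono hS⟩

theorem congr (hf : IsDifferenceMatching f S T D) (h : EqOn f f' S) :
    IsDifferenceMatching f' S T D := by
  have h_sub : EqOn (fun x => f x - x) (fun x => f' x - x) S := fun x hx => by simp only [h hx]
  exact ⟨hf.mapsTo.congr h, hf.injOn.congr h, hf.mapsTo_sub.congr h_sub, hf.injOn_sub.congr h_sub⟩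

theorem translate (hf : IsDifferenceMatching f S T D) (a b : ℤ) :
    IsDifferenceMatching (fun x => f (x - a) + b)
      ((· - a) ⁻¹' S) ((· - b) ⁻¹' T) ((· - (b - a)) ⁻¹' D) where
  mapsTo x hx := by simpa only [mem_preimage, add_sub_cancel_right] using hf.mapsTo hx
  injOn x hx y hy hxy := sub_left_injective (hf.injOn hx hy (add_right_cancel hxy))
  mapsTo_sub x hx := by
    have := hf.mapsTo_sub hx
    rw [mem_preimage]
    convert this using 1
    ring
  injOn_sub x hx y hy hxy := by
    refine sub_left_injective (hf.injOn_sub hx hy ?_)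
    dsimp only at hxy ⊢
    linarith

theorem union (hf : IsDifferenceMatching f S T D) (hf' : IsDifferenceMatching f S' T' D')
    (hS : Disjoint S S') (hT : Disjoint T T') (hD : Disjoint D D') :
    IsDifferenceMatching f (S ∪ S') (T ∪ T') (D ∪ D') where
  mapsTo := hf.mapsTo.union_union hf'.mapsTo
  injOn := (injOn_union hS).2
    ⟨hf.injOn, hf'.injOn, fun _ hx _ hy => hT.ne_of_mem (hf.mapsTo hx) (hf'.mapsTo hy)⟩
  mapsTo_sub := hf.mapsTo_sub.union_union hf'.mapsTo_sub
  injOn_sub := (injOn_union hS).2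
    ⟨hf.injOn_sub, hf'.injOn_sub,
      fun _ hx _ hy => hD.ne_of_mem (hf.mapsTo_sub hx) (hf'.mapsTo_sub hy)⟩

theorem exists_extend (hf : IsDifferenceMatching f S T D) (hf' : IsDifferenceMatching f' S' T' D')
    (hS : Disjoint S S') :
    ∃ g, IsDifferenceMatching g S T D ∧ IsDifferenceMatching g S' T' D' := by
  classical
  exact ⟨S.piecewise f f', hf.congr (S.piecewise_eqOn f f').symm,
    hf'.congr (((S.piecewise_eqOn_compl f f').mono hS.subset_compl_left).symm)⟩

end IsDifferenceMatching

end DifferenceMatching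

section IntervalMatching

/-- Some permutation of the interval `[0, n)` has pairwise distinct displacements, all in `D`. -/
def IntervalMatching (n : ℕ) (D : Set ℤ) : Prop :=
  ∃ f, IsDifferenceMatching f (Ico 0 n) (Ico 0 n) D

/-- The integers `d` with `s < |d| ≤ h`, in a form suited to linear arithmetic. -/
def annulus (s h : ℕ) : Set ℤ :=
  Icc (-h) h \ Icc (-s) s

theorem IntervalMatching.append {n n' : ℕ} {D D' : Set ℤ} (hM : IntervalMatching n D)
    (hM' : IntervalMatching n' D') (hD : Disjoint D D') : IntervalMatching (n + n') (D ∪ D') := by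
  obtain ⟨f, hf⟩ := hM
  obtain ⟨f', hf'⟩ := hM'
  have right : IsDifferenceMatching (fun x => f' (x - n) + n)
      (Ico (n : ℤ) (n + n')) (Ico n (n + n')) D' := by
    simpa [add_comm] using hf'.translate n n
  have disj : Disjoint (Ico (0 : ℤ) n) (Ico (n : ℤ) (n + n')) := Ico_disjoint_Ico_same
  obtain ⟨g, hg, hg'⟩ := hf.exists_extend right disj
  refine ⟨g, ?_⟩
  simpa [Ico_union_Ico_eq_Ico] using hg.union hg' disj disj hD

theorem intervalMatching_doubling (d : ℕ) : IntervalMatching (2 * d + 1) (Icc (-d) d) := by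
  refine ⟨fun x => if x ≤ d then 2 * x else 2 * x - (2 * d + 1), ?_, ?_, ?_, ?_⟩ <;>
    simp only [MapsTo, InjOn, mem_Ico, mem_Icc] <;> grind

theorem intervalMatching_annulus_zero (s : ℕ) : IntervalMatching (2 * s) (annulus 0 s) := by
  refine ⟨fun x => if x < s then 2 * x + 1 else 2 * (x - s), ?_, ?_, ?_, ?_⟩ <;>
    simp only [MapsTo, InjOn, mem_Ico, mem_Icc, annulus, mem_sdiff] <;> grind

theorem exists_isDifferenceMatching_exchange (n d : ℕ) :
    ∃ f, IsDifferenceMatching f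
      (Ico 0 (2 * d + 1) ∪ Ico (n + (2 * d + 1)) (n + 2 * (2 * d + 1)))
      (Ico 0 (2 * d + 1) ∪ Ico (n + (2 * d + 1)) (n + 2 * (2 * d + 1)))
      (annulus (n + d) (n + 3 * d + 1)) := by
  -- The two blocks are exchanged, each undergoing the permutation of `intervalMatching_doubling`.
  refine ⟨fun x => if x ≤ d then 2 * x + (n + (2 * d + 1))
    else if x < 2 * d + 1 then 2 * x + n
    else if x ≤ n + (3 * d + 1) then 2 * (x - (n + (2 * d + 1)))
    else 2 * (x - (n + (2 * d + 1))) - (2 * d + 1), ?_, ?_, ?_, ?_⟩ <;>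
    simp only [MapsTo, InjOn, mem_union, mem_Ico, mem_Icc, annulus, mem_sdiff] <;> grind

theorem IntervalMatching.surround {n : ℕ} {D : Set ℤ} (hM : IntervalMatching n D) (d : ℕ)
    (hD : D ⊆ Icc (-(n + d)) (n + d)) :
    IntervalMatching (n + 2 * (2 * d + 1)) (D ∪ annulus (n + d) (n + 3 * d + 1)) := by
  obtain ⟨f, hf⟩ := hM
  obtain ⟨f', outer⟩ := exists_isDifferenceMatching_exchange n d
  have inner := hf.translate (2 * d + 1) (2 * d + 1)
  simp only [preimage_sub_const_Ico, zero_add, sub_self, sub_zero, preimage_id'] at inner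
  have disj : Disjoint (Ico (2 * d + 1 : ℤ) (n + (2 * d + 1)))
      (Ico 0 (2 * d + 1) ∪ Ico (n + (2 * d + 1)) (n + 2 * (2 * d + 1))) := by
    rw [disjoint_union_right]
    exact ⟨Ico_disjoint_Ico_same.symm, Ico_disjoint_Ico_same⟩
  obtain ⟨g, hg, hg'⟩ := inner.exists_extend outer disj
  refine ⟨g, (hg.union hg' disj disj ?_).mono ?_ ?_ subset_rfl⟩
  · exact disjoint_sdiff_right.mono_left (by exact_mod_cast hD)
  · intro x
    simp only [mem_union, mem_Ico]
    omega
  · intro x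
    simp only [mem_union, mem_Ico]
    omega

theorem intervalMatching_annulus_one (s : ℕ) :
    IntervalMatching (2 * (2 * s + 1)) (annulus s (3 * s + 1)) := by
  have empty : IntervalMatching 0 ∅ := ⟨id, by constructor <;> simp [MapsTo]⟩
  simpa using empty.surround s (empty_subset _)

theorem intervalMatching_annulus_two (s : ℕ) :
    IntervalMatching (2 * (2 * s + 2)) (annulus s (3 * s + 2)) := by
  -- The displacements on the successive pieces are
  -- `3s + 1, 3s - 1, …, s + 1`; `3s + 2, 3s, …, s + 2`;
  -- `-(s + 2), -(s + 4), …, -(3s + 2)`; `-(s + 3), -(s + 5), …, -(3s + 1)`; `-(s + 1)`.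
  refine ⟨fun x => if x ≤ s then 3 * s + 1 - x else if x < 2 * (s + 1) then 5 * s + 4 - x
    else if x < 3 * (s + 1) then 3 * s + 2 - x else if x < 4 * s + 3 then 5 * s + 3 - x
    else 3 * s + 2, ?_, ?_, ?_, ?_⟩ <;>
    simp only [MapsTo, InjOn, mem_Ico, mem_Icc, annulus, mem_sdiff] <;> grind

theorem intervalMatching_annulus_three (s : ℕ) :
    IntervalMatching (2 * (2 * s + 3)) (annulus s (3 * s + 3)) := by
  -- The displacements on the successive pieces are
  -- `3s + 2, 3s, …, s + 2`; `-(s + 1)`; `3s + 3, 3s + 1, …, s + 1`;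
  -- `-(2s + 3), -(2s + 2), …, -(s + 3)`; `-(3s + 3), -(3s + 2), …, -(2s + 4)`; `-(s + 2)`.
  refine ⟨fun x => if x ≤ s then 3 * s + 2 - x else if x = s + 1 then 0
    else if x < 2 * s + 4 then 5 * s + 7 - x
    else if x < 3 * s + 5 then 2 * (x - (2 * s + 4)) + 1
    else if x < 4 * s + 5 then 2 * (x - (3 * s + 5)) + 2
    else 3 * s + 3, ?_, ?_, ?_, ?_⟩ <;>
    simp only [MapsTo, InjOn, mem_Ico, mem_Icc, annulus, mem_sdiff] <;> grind (splits := 12)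

theorem intervalMatching_insert_zero_annulus (s : ℕ) :
    IntervalMatching (4 * s + 1) (insert 0 (annulus s (3 * s))) := by
  -- Two families of nested transpositions, with sums `3s - 1` and `5s`, around the fixed point
  -- `3s`: the distances are `3s - 1, 3s - 3, …, s + 1` in one and `3s, 3s - 2, …, s + 2` in the
  -- other.
  refine ⟨fun x => if x = 3 * s then x
    else if x < s ∨ 2 * s ≤ x ∧ x < 3 * s then 3 * s - 1 - x else 5 * s - x, ?_, ?_, ?_, ?_⟩ <;>
    simp only [MapsTo, InjOn, mem_Ico, mem_Icc, annulus, mem_sdiff, mem_insert_iff] <;> grind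

end IntervalMatching

section SplitMatching

/-- Permutations of two intervals of lengths `a` and `b` whose displacements are, taken together,
pairwise distinct elements of `[-h, h]`. Placed side by side they permute `[0, a + b)` without
crossing the cut at `a`. -/
def SplitMatching (h a b : ℕ) : Prop :=
  ∃ D ⊆ Icc (-h : ℤ) h, IntervalMatching a D ∧ IntervalMatching b (Icc (-h) h \ D)

namespace SplitMatching

variable {s h a b : ℕ}

theorem symm (hM : SplitMatching h a b) : SplitMatching h b a := by
  obtain ⟨D, hD, hMa, hMb⟩ := hM
  exact ⟨Icc (-h) h \ D, sdiff_subset, hMb, by rwa [sdiff_sdiff_cancel_left hD]⟩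

theorem zero_left (h : ℕ) : SplitMatching h 0 (2 * h + 1) :=
  ⟨∅, empty_subset _, ⟨id, by constructor <;> simp [MapsTo]⟩,
    by simpa using intervalMatching_doubling h⟩

theorem three_mul (s : ℕ) : SplitMatching (3 * s) (2 * s) (4 * s + 1) := by
  refine ⟨annulus 0 s, ?_, intervalMatching_annulus_zero s, ?_⟩
  · intro x
    simp only [annulus, mem_sdiff, mem_Icc]
    omega
  · obtain ⟨f, hf⟩ := intervalMatching_insert_zero_annulus s
    refine ⟨f, hf.mono subset_rfl subset_rfl fun x => ?_⟩
    simp only [annulus, mem_sdiff, mem_insert_iff, mem_Icc]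
    omega

theorem grow (hM : SplitMatching s a b) (hsh : s ≤ h) {b' : ℕ}
    (enlarge : ∀ D ⊆ Icc (-s : ℤ) s,
      IntervalMatching b D → IntervalMatching b' (D ∪ annulus s h)) :
    SplitMatching h a b' := by
  obtain ⟨D, hD, hMa, hMb⟩ := hM
  have hIcc : Icc (-s : ℤ) s ⊆ Icc (-h) h := Icc_subset_Icc (by omega) (by omega)
  refine ⟨D, hD.trans hIcc, hMa, ?_⟩
  have := enlarge _ sdiff_subset hMb
  rwa [annulus, union_comm, sdiff_union_sdiff_cancel hIcc hD] at this

theorem append (hM : SplitMatching s a b) (hsh : s ≤ h) {n : ℕ}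
    (hn : IntervalMatching n (annulus s h)) : SplitMatching h a (b + n) :=
  hM.grow hsh fun _ hD hMb => hMb.append hn (disjoint_sdiff_right.mono_left hD)

theorem surround {d : ℕ} (hM : SplitMatching (b + d) a b) :
    SplitMatching (b + 3 * d + 1) a (b + 2 * (2 * d + 1)) :=
  hM.grow (by omega) fun _ hD hMb => hMb.surround d (by exact_mod_cast hD)

end SplitMatching

theorem splitMatching_of_add_eq {h a b : ℕ} (hab : a + b = 2 * h + 1) : SplitMatching h a b := by
  induction h using Nat.strong_induction_on generalizing a b with
  | _ h ih =>
    wlog hle : a ≤ b generalizing a b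
    · exact (this (by omega) (by omega)).symm
    rcases Nat.eq_zero_or_pos a with rfl | ha
    · obtain rfl : b = 2 * h + 1 := by omega
      exact SplitMatching.zero_left h
    by_cases hlarge : 2 * (h - a) + 1 ≤ a
    · obtain ⟨d, n, rfl, rfl, rfl⟩ : ∃ d n, a = n + (2 * d + 1) ∧ b = n + 2 * (2 * d + 1) ∧
          h = n + 3 * d + 1 := ⟨h - a, a - (2 * (h - a) + 1), by omega, by omega, by omega⟩
      exact (ih _ (by omega) (by omega)).surround
    have append_of {s g : ℕ} (hg : 0 < g) (hh : h = s + g) (has : a ≤ 2 * s + 1)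
        (hL : IntervalMatching (2 * g) (annulus s h)) : SplitMatching h a b := by
      obtain ⟨n, rfl⟩ : ∃ n, b = n + 2 * g := ⟨b - 2 * g, by omega⟩
      exact (ih s (by omega) (by omega)).append (by omega) hL
    obtain ⟨s, rfl | rfl | rfl⟩ : ∃ s, h = 3 * s + 1 ∨ h = 3 * s + 2 ∨ h = 3 * s + 3 :=
      ⟨(h - 1) / 3, by omega⟩
    · exact append_of (by omega) (by omega) (by omega) (intervalMatching_annulus_one s)
    · exact append_of (by omega) (by omega) (by omega) (intervalMatching_annulus_two s)
    · by_cases ha' : a = 2 * (s + 1)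
      · obtain rfl : b = 4 * (s + 1) + 1 := by omega
        exact ha' ▸ SplitMatching.three_mul (s + 1)
      · exact append_of (by omega) (by omega) (by omega) (intervalMatching_annulus_three s)

end SplitMatching


theorem exists_perm_fin_of_injOn {m : ℕ} {f : ℤ → ℤ} (mapsTo : MapsTo f (Ico 0 m) (Ico 0 m))
    (injOn : InjOn f (Ico 0 m)) : ∃ σ : Equiv.Perm (Fin m), ∀ x, ((σ x : ℕ) : ℤ) = f (x : ℕ) := by
  have mem (x : Fin m) : ((x : ℕ) : ℤ) ∈ Ico (0 : ℤ) m := by simp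
  have maps (x : Fin m) : 0 ≤ f (x : ℕ) ∧ f (x : ℕ) < m := mapsTo (mem x)
  let g (x : Fin m) : Fin m := ⟨(f (x : ℕ)).toNat, by grind⟩
  have g_apply (x : Fin m) : ((g x : ℕ) : ℤ) = f (x : ℕ) := Int.toNat_of_nonneg (maps x).1
  have g_inj : Function.Injective g := fun x y hxy =>
    Fin.ext (by exact_mod_cast injOn (mem x) (mem y) (by rw [← g_apply, ← g_apply, hxy]))
  exact ⟨.ofBijective g (Finite.injective_iff_bijective.1 g_inj), g_apply⟩

theorem exists_perm_add_eq_add {h a : ℕ} (ha : a ≤ 2 * h + 1) :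
    ∃ X Y : Equiv.Perm (Fin (2 * h + 1)),
      ∀ w, (X w + w : ℕ) = Y w + h ∧ ((X w : ℕ) < a ↔ (Y w : ℕ) < a) := by
  obtain ⟨D, hD, ⟨f₁, hf₁⟩, ⟨f₂, hf₂⟩⟩ :=
    splitMatching_of_add_eq (h := h) (a := a) (b := 2 * h + 1 - a) (by omega)
  have hf₂ := hf₂.translate a a
  simp only [preimage_sub_const_Ico, sub_self, sub_zero, preimage_id', zero_add,
    Nat.cast_sub ha, sub_add_cancel] at hf₂
  have disj : Disjoint (Ico (0 : ℤ) a) (Ico (a : ℤ) (2 * h + 1 : ℕ)) := Ico_disjoint_Ico_same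
  obtain ⟨f, left, right⟩ := hf₁.exists_extend hf₂ disj
  have whole := left.union right disj disj disjoint_sdiff_right
  rw [Ico_union_Ico_eq_Ico (by omega) (by exact_mod_cast ha), union_sdiff_cancel hD] at whole
  obtain ⟨F, hF⟩ := exists_perm_fin_of_injOn whole.mapsTo whole.injOn
  obtain ⟨W, hW⟩ : ∃ W : Equiv.Perm (Fin (2 * h + 1)),
      ∀ x, ((W x : ℕ) : ℤ) = f (x : ℕ) - (x : ℕ) + h := by
    refine exists_perm_fin_of_injOn (f := fun x => f x - x + h) (fun x hx => ?_)
      fun x hx y hy hxy => whole.injOn_sub hx hy (add_right_cancel hxy)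
    have := whole.mapsTo_sub hx
    simp only [mem_Icc, mem_Ico] at this ⊢
    omega
  have cut (x : Fin (2 * h + 1)) : (x : ℕ) < a ↔ (F x : ℕ) < a := by
    have := hF x
    have hl := @left.mapsTo (x : ℕ)
    have hr := @right.mapsTo (x : ℕ)
    simp only [mem_Ico] at hl hr
    omega
  refine ⟨W.symm, W.symm.trans F, fun w => ⟨?_, cut _⟩⟩
  have hF_w := hF (W.symm w)
  have hW_w := hW (W.symm w)
  rw [W.apply_symm_apply] at hW_w
  simp only [Equiv.trans_apply]
  omega

section Labeling

theorem range_eq_Icc_one_card_s13 {V : Type*} [Fintype V] {f : V → ℕ} (inj : Function.Injective f)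
    (mem : ∀ v, f v ∈ Icc 1 (Fintype.card V)) : range f = Icc 1 (Fintype.card V) := by
  refine eq_of_subset_of_ncard_le (range_subset_iff.2 mem) ?_ (finite_Icc _ _)
  rw [ncard_range_of_injective inj, Nat.card_eq_fintype_card, ← Finset.coe_Icc,
    ncard_coe_finset, Nat.card_Icc, Nat.add_sub_cancel]

theorem exists_isSuperEdgeMagic_of_injective_sum {V E : Type} [Fintype V] [Fintype E]
    {ends : E → V × V} {fv : V → ℕ} {s : ℕ} (fv_inj : Function.Injective fv)
    (fv_mem : ∀ v, fv v ∈ Icc 1 (Fintype.card V))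
    (sum_inj : Function.Injective fun e => fv (ends e).1 + fv (ends e).2)
    (sum_mem : ∀ e, fv (ends e).1 + fv (ends e).2 ∈ Ico s (s + Fintype.card E)) :
    ∃ fe, IsSuperEdgeMagic ends fv fe (s + Fintype.card V + Fintype.card E) := by
  simp only [mem_Icc, mem_Ico] at fv_mem sum_mem
  obtain ⟨fe, fe_add⟩ : ∃ fe : E → ℕ, ∀ e,
      fv (ends e).1 + fe e + fv (ends e).2 = s + Fintype.card V + Fintype.card E := by
    refine ⟨fun e => s + Fintype.card V + Fintype.card E - (fv (ends e).1 + fv (ends e).2),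
      fun e => ?_⟩
    have := sum_mem e
    dsimp only
    omega
  have fe_mem (e : E) : Fintype.card V < fe e ∧ fe e ≤ Fintype.card V + Fintype.card E := by
    have := sum_mem e
    have := fe_add e
    omega
  have fe_inj : Function.Injective fe := fun e e' h => sum_inj (by
    have := fe_add e
    have := fe_add e'
    dsimp only
    omega)
  have inj : Function.Injective (Sum.elim fv fe) :=
    fv_inj.sumElim fe_inj fun v e => ((fv_mem v).2.trans_lt (fe_mem e).1).ne
  refine ⟨fe, ⟨inj, ?_, fe_add⟩, range_eq_Icc_one_card_s13 fv_inj fv_mem⟩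
  rw [← Fintype.card_sum]
  refine range_eq_Icc_one_card_s13 inj ?_
  rw [Fintype.card_sum]
  rintro (v | e)
  · exact ⟨(fv_mem v).1, (fv_mem v).2.trans le_self_add⟩
  · exact ⟨(Nat.zero_le _).trans_lt (fe_mem e).1, (fe_mem e).2⟩

end Labeling

section Cycle

/-- The labels of an odd cycle `C_m` (counted from `0`) giving consecutive edge sums:
multiplication by `(m + 1) / 2` modulo `m`. -/
def halfMod (m i : ℕ) : ℕ := if i % 2 = 0 then i / 2 else (i + m) / 2

theorem cycleEnds_snd_injective (m : ℕ) : Function.Injective fun i => (cycleEnds m i).2 := by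
  intro i i' hii
  have : (i : ℕ) ≡ i' [MOD m] := Nat.ModEq.add_right_cancel' 1 (Fin.ext_iff.1 hii)
  exact Fin.ext (this.eq_of_lt_of_lt i.isLt i'.isLt)

theorem exists_perm_cycleEnds_add (h : ℕ) :
    ∃ c : Equiv.Perm (Fin (2 * h + 1)),
      ∀ i, (c i + c (cycleEnds _ i).2 : ℕ) = h + (cycleEnds _ i).2 := by
  let c (i : Fin (2 * h + 1)) : Fin (2 * h + 1) := ⟨halfMod (2 * h + 1) i, by grind [halfMod]⟩
  have c_inj : Function.Injective c := by
    intro i i' hii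
    have := Fin.ext_iff.1 hii
    grind [halfMod]
  refine ⟨.ofBijective c (Finite.injective_iff_bijective.1 c_inj), fun i => ?_⟩
  have hi : (i : ℕ) < 2 * h + 1 := i.isLt
  simp only [Equiv.ofBijective_apply, c, cycleEnds, halfMod]
  rcases (Nat.lt_succ_iff.1 hi).lt_or_eq with hlt | heq
  · rw [Nat.mod_eq_of_lt (show (i : ℕ) + 1 < 2 * h + 1 by omega)]
    grind
  · rw [heq, Nat.mod_self]
    grind

end Cycle

section Crown

/-- The increasing enumeration of `ℕ` with the gap `[t, t + m)` removed. -/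
def skipGap (t m y : ℕ) : ℕ := if y < t then y else y + m

theorem skipGap_injective (t m : ℕ) : Function.Injective (skipGap t m) := by
  intro y y'
  unfold skipGap
  grind

theorem skipGap_add_eq_skipGap_add {t m x y w h : ℕ} (hx : x < m) (hy : y < m)
    (hxy : x < t % m ↔ y < t % m) (hadd : x + w = y + h) (j : ℕ) :
    skipGap t m (x + m * j) + w = skipGap t m (y + m * j) + h := by
  have lt_iff {z : ℕ} (hz : z < m) : z + m * j < t ↔ j < t / m ∨ j = t / m ∧ z < t % m := by
    have hdiv := Nat.mod_add_div t m
    have hmod := Nat.mod_lt t (hz.pos)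
    rcases lt_trichotomy j (t / m) with hj | rfl | hj
    · have := Nat.mul_le_mul_left m hj
      rw [Nat.mul_succ] at this
      omega
    · omega
    · have := Nat.mul_le_mul_left m hj
      rw [Nat.mul_succ] at this
      omega
  have : x + m * j < t ↔ y + m * j < t := by rw [lt_iff hx, lt_iff hy, hxy]
  unfold skipGap
  grind

variable {m : ℕ} {i p : Fin m → Fin m}

/-- Vertex labels of the crown, counted from `0`: `v_x ↦ t + i x` on the cycle, while the pendant
vertices receive the labels outside `[t, t + m)`, filled in blocks of length `m`, one for each `j`;
in block `j` the vertex `v_x^j` has position `p x`. The same formula on the edges enumerates the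
edge sums. -/
def crownLabel (n t : ℕ) (i p : Fin m → Fin m) : Fin m ⊕ Fin m × Fin n → ℕ :=
  Sum.elim (fun x => t + i x) fun q => skipGap t m (finProdFinEquiv (q.2, p q.1))

theorem crownLabel_injective (n t : ℕ) (hi : Function.Injective i) (hp : Function.Injective p) :
    Function.Injective (crownLabel n t i p) := by
  refine Function.Injective.sumElim
    (fun x y hxy => hi (Fin.ext (Nat.add_left_cancel hxy))) (fun q q' hq => ?_) fun x q => ?_
  · have := finProdFinEquiv.injective (Fin.ext (skipGap_injective t m hq))
    exact Prod.ext (hp (congrArg Prod.snd this)) (congrArg Prod.fst this)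
  · unfold skipGap
    grind

theorem crownLabel_lt {n t : ℕ} (ht : t ≤ m * n) (v : Fin m ⊕ Fin m × Fin n) :
    crownLabel n t i p v < m * n + m := by
  rcases v with x | q
  · simp only [crownLabel, Sum.elim_inl]
    omega
  · have : (finProdFinEquiv (q.2, p q.1) : ℕ) < m * n :=
      (finProdFinEquiv (q.2, p q.1)).isLt.trans_eq (mul_comm n m)
    simp only [crownLabel, Sum.elim_inr, skipGap]
    grind

theorem crownLabel_add_crownLabel {n t h : ℕ} {c X Y : Fin m → Fin m}
    (hc : ∀ x, (c x + c (cycleEnds m x).2 : ℕ) = h + (cycleEnds m x).2)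
    (hXY : ∀ w, (X w + w : ℕ) = Y w + h ∧ ((X w : ℕ) < t % m ↔ (Y w : ℕ) < t % m))
    (e : Fin m ⊕ Fin m × Fin n) :
    crownLabel n t c (X ∘ c) (crownEnds m n e).1 + crownLabel n t c (X ∘ c) (crownEnds m n e).2 =
      t + h + crownLabel n t (fun x => (cycleEnds m x).2) (Y ∘ c) e := by
  rcases e with x | q
  · have := hc x
    simp only [cycleEnds] at this
    simp only [crownLabel, crownEnds, cycleEnds, Sum.elim_inl]
    omega
  · obtain ⟨hadd, hcut⟩ := hXY (c q.1)
    have := skipGap_add_eq_skipGap_add (X _).isLt (Y _).isLt hcut hadd q.2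
    simp only [crownLabel, crownEnds, Sum.elim_inl, Sum.elim_inr, Function.comp_apply,
      finProdFinEquiv_apply_val]
    omega

theorem exists_isSuperEdgeMagic_crownEnds {h n t : ℕ} (ht : t ≤ (2 * h + 1) * n) :
    ∃ fv fe, IsSuperEdgeMagic (crownEnds (2 * h + 1) n) fv fe
      (t + h + 2 + 2 * ((2 * h + 1) * n + (2 * h + 1))) := by
  obtain ⟨c, hc⟩ := exists_perm_cycleEnds_add h
  obtain ⟨X, Y, hXY⟩ := exists_perm_add_eq_add (Nat.mod_lt t (Nat.succ_pos (2 * h))).le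
  have card : Fintype.card (Fin (2 * h + 1) ⊕ Fin (2 * h + 1) × Fin n) =
      (2 * h + 1) * n + (2 * h + 1) := by simp [add_comm]
  let fv v := crownLabel n t c (X ∘ c) v + 1
  have fv_inj : Function.Injective fv := (add_left_injective 1).comp
    (crownLabel_injective n t c.injective (X.injective.comp c.injective))
  let edgeLabel := crownLabel n t (fun x => (cycleEnds _ x).2) (Y ∘ c)
  have edgeLabel_inj : Function.Injective edgeLabel :=
    crownLabel_injective n t (cycleEnds_snd_injective _) (Y.injective.comp c.injective)
  have sum_eq (e) :
      fv (crownEnds _ n e).1 + fv (crownEnds _ n e).2 = t + h + 2 + edgeLabel e := by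
    have : _ = t + h + edgeLabel e := crownLabel_add_crownLabel hc hXY e
    simp only [fv]
    omega
  obtain ⟨fe, hfe⟩ := exists_isSuperEdgeMagic_of_injective_sum
    (ends := crownEnds (2 * h + 1) n) (s := t + h + 2) fv_inj
    (fun v => ⟨Nat.succ_pos _, card ▸ crownLabel_lt ht v⟩)
    (by simpa only [sum_eq, Function.comp_def] using (add_right_injective _).comp edgeLabel_inj)
    (fun e => by
      rw [sum_eq, card]
      exact ⟨le_self_add, Nat.add_lt_add_left (crownLabel_lt ht e) _⟩)
  rw [card, add_assoc, ← two_mul] at hfe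
  exact ⟨fv, fe, hfe⟩

end Crown

theorem crown_primePower_perfectSuperEdgeMagic_general (m n : ℕ) (hm : Odd m) :
    ∀ j : ℕ, 2 * m * n + (5 * m + 3) / 2 ≤ j → j ≤ 3 * m * n + (5 * m + 3) / 2 →
      ∃ fv fe, IsSuperEdgeMagic (crownEnds m n) fv fe j := by
  obtain ⟨h, rfl⟩ := hm
  intro j hj hj'
  rw [mul_assoc] at hj hj'
  obtain ⟨t, rfl⟩ : ∃ t, j = t + h + 2 + 2 * ((2 * h + 1) * n + (2 * h + 1)) :=
    ⟨j - (h + 2 + 2 * ((2 * h + 1) * n + (2 * h + 1))), by omega⟩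
  exact exists_isSuperEdgeMagic_crownEnds (by omega)

/-- for m = p^k an odd prime power and n ≥ 1, the crown
C_m ⊙ K̄_n is perfect super edge-magic: every integer j with
2mn + (5m+3)/2 ≤ j ≤ 3mn + (5m+3)/2 is the valence of a super edge-magic
labeling of C_m ⊙ K̄_n. -/
theorem crown_primePower_perfectSuperEdgeMagic (p k n m : ℕ) (hp : p.Prime)
    (hp2 : 2 < p) (hk : 1 ≤ k) (hn : 1 ≤ n) (hm : m = p ^ k) :
    ∀ j : ℕ, 2 * m * n + (5 * m + 3) / 2 ≤ j → j ≤ 3 * m * n + (5 * m + 3) / 2 →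
      ∃ fv fe, IsSuperEdgeMagic (crownEnds m n) fv fe j := by
  subst hm
  exact crown_primePower_perfectSuperEdgeMagic_general _ n (hp.odd_of_ne_two hp2.ne').pow
end

section
/- For every even integer n ≥ 4, the cycle C_n admits an edge-magic labeling with valence (5n+4)/2. -/
/-!
Order an interval of consecutive integers as a zigzag between its lower and upper parts, so that the
sums of neighbours increase by one at a time, except that in the middle one step stays inside the
lower part: this trades the middle sum for one just below all the others. The edge labels forced by
the valence then fill an interval with a single gap, left by the traded sum.

For `n = 4 t + 4` the label `6 t + 6` in the gap is given to a new vertex, and the zigzag is closed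
up through it and one more vertex labelled `1`. For `n = 4 t + 2` the zigzag runs through the whole
cycle; raising its last label from `2 t + 2` to `4 t + 3` makes the sum on the closing edge the
missing one, and `2 t + 2` becomes an edge label.
-/

theorem IsEdgeMagic.of_injective {V E : Type} [Fintype V] [Fintype E] {ends : E → V × V}
    {fv : V → ℕ} {fe : E → ℕ} {k : ℕ} {S : Set ℕ}
    (hS : S ⊆ Set.Icc 1 (Fintype.card V + Fintype.card E))
    (hfv : Function.Injective fv) (hfe : Function.Injective fe)
    (hfv_mem : ∀ v, fv v ∈ S)
    (hfe_mem : ∀ e, fe e ∈ Set.Icc 1 (Fintype.card V + Fintype.card E) \ S)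
    (hk : ∀ e, fv (ends e).1 + fe e + fv (ends e).2 = k) :
    IsEdgeMagic ends fv fe k := by
  have hinj : Function.Injective (Sum.elim fv fe) :=
    hfv.sumElim hfe fun v e h ↦ (hfe_mem e).2 (h ▸ hfv_mem v)
  have hsub : Set.range (Sum.elim fv fe) ⊆ Set.Icc 1 (Fintype.card V + Fintype.card E) := by
    rw [Set.Sum.elim_range]
    exact Set.union_subset (Set.range_subset_iff.2 fun v ↦ hS (hfv_mem v))
      (Set.range_subset_iff.2 fun e ↦ (hfe_mem e).1)
  refine ⟨hinj, Set.eq_of_subset_of_ncard_le hsub ?_ (Set.finite_Icc _ _), hk⟩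
  rw [← Set.image_univ, Set.ncard_image_of_injective _ hinj, Set.ncard_univ,
    Nat.card_eq_fintype_card, Fintype.card_sum, ← Finset.coe_Icc, Set.ncard_coe_finset,
    Nat.card_Icc, Nat.add_sub_cancel]

theorem isEdgeMagic_cycleEnds {n k : ℕ} {f g : ℕ → ℕ} {S : Set ℕ}
    (hS : S ⊆ Set.Icc 1 (2 * n))
    (hf : Set.InjOn f (Set.Iio n)) (hg : Set.InjOn g (Set.Iio n))
    (hfS : Set.MapsTo f (Set.Iio n) S) (hgS : Set.MapsTo g (Set.Iio n) (Set.Icc 1 (2 * n) \ S))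
    (hstep : ∀ p, p + 1 < n → f p + g p + f (p + 1) = k)
    (hclose : f (n - 1) + g (n - 1) + f 0 = k) :
    IsEdgeMagic (cycleEnds n) (fun i ↦ f i) (fun i ↦ g i) k := by
  have hcard : Fintype.card (Fin n) + Fintype.card (Fin n) = 2 * n := by
    rw [Fintype.card_fin, two_mul]
  refine .of_injective (hcard ▸ hS) (fun i j h ↦ Fin.ext (hf i.2 j.2 h))
    (fun i j h ↦ Fin.ext (hg i.2 j.2 h)) (fun i ↦ hfS i.2) (fun i ↦ hcard ▸ hgS i.2) fun i ↦ ?_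
  obtain hi | hi : (i : ℕ) + 1 < n ∨ (i : ℕ) = n - 1 := by omega
  · simpa only [cycleEnds, Nat.mod_eq_of_lt hi] using hstep i hi
  · have hn : (i : ℕ) + 1 = n := by omega
    simpa only [cycleEnds, hn, Nat.mod_self, ← hi] using hclose

/-- The folded zigzag `0, 2t+2, 1, 2t+3, …, 3t+1, t, t+1, 3t+2, t+2, …, 4t+1, 2t+1`, a permutation
of `{0, …, 4t+1}` whose sums of neighbours are consecutive integers, except for the one in the
middle, which is smaller than all the others. Only the values at `p < 4t+2` are meaningful. -/
def foldedZigzag (t p : ℕ) : ℕ :=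
  if p ≤ 2 * t then
    if Even p then p / 2 else 2 * t + 2 + p / 2
  else
    if Even p then 2 * t + 1 + p / 2 else (p + 1) / 2

section

variable {t p : ℕ}

theorem foldedZigzag_zero (t : ℕ) : foldedZigzag t 0 = 0 := by
  simp [foldedZigzag]

theorem foldedZigzag_four_mul (ht : 0 < t) : foldedZigzag t (4 * t) = 4 * t + 1 := by
  grind [foldedZigzag]

theorem foldedZigzag_four_mul_add_one (t : ℕ) : foldedZigzag t (4 * t + 1) = 2 * t + 1 := by
  grind [foldedZigzag]

theorem foldedZigzag_lt (hp : p < 4 * t + 2) : foldedZigzag t p < 4 * t + 2 := by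
  grind [foldedZigzag]

theorem foldedZigzag_injOn (t : ℕ) : Set.InjOn (foldedZigzag t) (Set.Iio (4 * t + 2)) := by
  -- The branches take values in the disjoint intervals `[0, t]`, `[2t+2, 3t+1]`, `[3t+2, 4t+1]`
  -- and `[t+1, 2t+1]`, respectively.
  intro p hp q hq h
  grind [foldedZigzag]

theorem foldedZigzag_ne_two_mul_add_one (hp : p < 4 * t + 1) : foldedZigzag t p ≠ 2 * t + 1 := by
  rw [← foldedZigzag_four_mul_add_one t]
  exact (foldedZigzag_injOn t).ne (Set.mem_Iio.2 (by omega)) (Set.mem_Iio.2 (by omega)) hp.ne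

theorem foldedZigzag_middle_add_succ (t : ℕ) :
    foldedZigzag t (2 * t) + foldedZigzag t (2 * t + 1) = 2 * t + 1 := by
  grind [foldedZigzag]

theorem foldedZigzag_add_succ (hp : p ≠ 2 * t) :
    foldedZigzag t p + foldedZigzag t (p + 1) = 2 * t + 2 + p := by
  grind [foldedZigzag]

/-- The vertex labels of the cycle of length `4 t + 2`: the folded zigzag on `{1, …, 4t+2}`, with
its last label `2t+2` replaced by `4t+3`. -/
def vertexLabelTwoModFour (t p : ℕ) : ℕ :=
  if p = 4 * t + 1 then 4 * t + 3 else foldedZigzag t p + 1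

/-- The edge labels of the cycle of length `4 t + 2`, which complement `vertexLabelTwoModFour` to
the valence `10 t + 7`; the label at `p` is that of the edge from position `p` to its successor. -/
def edgeLabelTwoModFour (t p : ℕ) : ℕ :=
  if p = 2 * t then 8 * t + 4
  else if p = 4 * t then 2 * t + 2
  else if p = 4 * t + 1 then 6 * t + 3
  else 8 * t + 3 - p

theorem vertexLabelTwoModFour_injOn (t : ℕ) :
    Set.InjOn (vertexLabelTwoModFour t) (Set.Iio (4 * t + 2)) := by
  intro p hp q hq h
  have hpq := @foldedZigzag_injOn t p hp q hq
  have hp_lt := foldedZigzag_lt hp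
  have hq_lt := foldedZigzag_lt hq
  grind [vertexLabelTwoModFour]

theorem vertexLabelTwoModFour_mapsTo (t : ℕ) :
    Set.MapsTo (vertexLabelTwoModFour t) (Set.Iio (4 * t + 2))
      (Set.Icc 1 (4 * t + 3) \ {2 * t + 2}) := by
  intro p hp
  grind [vertexLabelTwoModFour, foldedZigzag_lt, foldedZigzag_ne_two_mul_add_one]

theorem edgeLabelTwoModFour_injOn (t : ℕ) :
    Set.InjOn (edgeLabelTwoModFour t) (Set.Iio (4 * t + 2)) := by
  intro p hp q hq h
  grind [edgeLabelTwoModFour]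

theorem edgeLabelTwoModFour_mapsTo (ht : 0 < t) :
    Set.MapsTo (edgeLabelTwoModFour t) (Set.Iio (4 * t + 2))
      (Set.Icc 1 (2 * (4 * t + 2)) \ (Set.Icc 1 (4 * t + 3) \ {2 * t + 2})) := by
  intro p hp
  grind [edgeLabelTwoModFour]

theorem labelTwoModFour_add_succ (ht : 0 < t) (hp : p + 1 < 4 * t + 2) :
    vertexLabelTwoModFour t p + edgeLabelTwoModFour t p + vertexLabelTwoModFour t (p + 1) =
      10 * t + 7 := by
  grind [vertexLabelTwoModFour, edgeLabelTwoModFour, foldedZigzag_add_succ,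
    foldedZigzag_middle_add_succ, foldedZigzag_four_mul]

theorem labelTwoModFour_close (t : ℕ) :
    vertexLabelTwoModFour t (4 * t + 1) + edgeLabelTwoModFour t (4 * t + 1) +
      vertexLabelTwoModFour t 0 = 10 * t + 7 := by
  grind [vertexLabelTwoModFour, edgeLabelTwoModFour, foldedZigzag_zero]

theorem isEdgeMagic_cycleEnds_four_mul_add_two (ht : 0 < t) :
    IsEdgeMagic (cycleEnds (4 * t + 2)) (fun i ↦ vertexLabelTwoModFour t i)
      (fun i ↦ edgeLabelTwoModFour t i) (10 * t + 7) :=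
  isEdgeMagic_cycleEnds (Set.sdiff_subset.trans (Set.Icc_subset_Icc_right (by omega)))
    (vertexLabelTwoModFour_injOn t) (edgeLabelTwoModFour_injOn t)
    (vertexLabelTwoModFour_mapsTo t) (edgeLabelTwoModFour_mapsTo ht)
    (fun _ ↦ labelTwoModFour_add_succ ht) (labelTwoModFour_close t)

/-- The vertex labels of the cycle of length `4 t + 4`: the folded zigzag on `{2, …, 4t+3}`,
followed by `1` and `6t+6`. -/
def vertexLabelZeroModFour (t p : ℕ) : ℕ :=
  if p = 4 * t + 3 then 6 * t + 6
  else if p = 4 * t + 2 then 1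
  else foldedZigzag t p + 2

/-- The edge labels of the cycle of length `4 t + 4`, which complement `vertexLabelZeroModFour` to
the valence `10 t + 12`; the label at `p` is that of the edge from position `p` to its successor. -/
def edgeLabelZeroModFour (t p : ℕ) : ℕ :=
  if p = 2 * t then 8 * t + 7
  else if p = 4 * t + 1 then 8 * t + 8
  else if p = 4 * t + 2 then 4 * t + 5
  else if p = 4 * t + 3 then 4 * t + 4
  else 8 * t + 6 - p

theorem vertexLabelZeroModFour_injOn (t : ℕ) :
    Set.InjOn (vertexLabelZeroModFour t) (Set.Iio (4 * t + 4)) := by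
  intro p hp q hq h
  have hpq := @foldedZigzag_injOn t p
  grind [vertexLabelZeroModFour, foldedZigzag_lt]

theorem vertexLabelZeroModFour_mapsTo (t : ℕ) :
    Set.MapsTo (vertexLabelZeroModFour t) (Set.Iio (4 * t + 4))
      (insert (6 * t + 6) (Set.Icc 1 (4 * t + 3))) := by
  intro p hp
  grind [vertexLabelZeroModFour, foldedZigzag_lt]

theorem edgeLabelZeroModFour_injOn (t : ℕ) :
    Set.InjOn (edgeLabelZeroModFour t) (Set.Iio (4 * t + 4)) := by
  intro p hp q hq h
  grind [edgeLabelZeroModFour]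

theorem edgeLabelZeroModFour_mapsTo (t : ℕ) :
    Set.MapsTo (edgeLabelZeroModFour t) (Set.Iio (4 * t + 4))
      (Set.Icc 1 (2 * (4 * t + 4)) \ insert (6 * t + 6) (Set.Icc 1 (4 * t + 3))) := by
  intro p hp
  grind [edgeLabelZeroModFour]

theorem labelZeroModFour_add_succ (hp : p + 1 < 4 * t + 4) :
    vertexLabelZeroModFour t p + edgeLabelZeroModFour t p + vertexLabelZeroModFour t (p + 1) =
      10 * t + 12 := by
  grind [vertexLabelZeroModFour, edgeLabelZeroModFour, foldedZigzag_add_succ,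
    foldedZigzag_middle_add_succ, foldedZigzag_four_mul_add_one]

theorem labelZeroModFour_close (t : ℕ) :
    vertexLabelZeroModFour t (4 * t + 3) + edgeLabelZeroModFour t (4 * t + 3) +
      vertexLabelZeroModFour t 0 = 10 * t + 12 := by
  grind [vertexLabelZeroModFour, edgeLabelZeroModFour, foldedZigzag_zero]

theorem isEdgeMagic_cycleEnds_four_mul_add_four (t : ℕ) :
    IsEdgeMagic (cycleEnds (4 * t + 4)) (fun i ↦ vertexLabelZeroModFour t i)
      (fun i ↦ edgeLabelZeroModFour t i) (10 * t + 12) :=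
  isEdgeMagic_cycleEnds
    (Set.insert_subset (Set.mem_Icc.2 (by omega)) (Set.Icc_subset_Icc_right (by omega)))
    (vertexLabelZeroModFour_injOn t) (edgeLabelZeroModFour_injOn t)
    (vertexLabelZeroModFour_mapsTo t) (edgeLabelZeroModFour_mapsTo t)
    (fun _ ↦ labelZeroModFour_add_succ) (labelZeroModFour_close t)

end

/-- every even cycle C_n (n ≥ 4) has an edge-magic labeling
with valence (5n+4)/2. -/
theorem evenCycle_edgeMagic (n : ℕ) (hn : 4 ≤ n) (he : Even n) :
    ∃ fv fe, IsEdgeMagic (cycleEnds n) fv fe ((5 * n + 4) / 2) := by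
  obtain ⟨t, rfl | ⟨ht, rfl⟩⟩ : ∃ t, n = 4 * t + 4 ∨ 0 < t ∧ n = 4 * t + 2 := by
    obtain ⟨m, rfl⟩ := he.two_dvd
    exact ⟨(m - 1) / 2, by omega⟩
  · rw [show (5 * (4 * t + 4) + 4) / 2 = 10 * t + 12 by omega]
    exact ⟨_, _, isEdgeMagic_cycleEnds_four_mul_add_four t⟩
  · rw [show (5 * (4 * t + 2) + 4) / 2 = 10 * t + 7 by omega]
    exact ⟨_, _, isEdgeMagic_cycleEnds_four_mul_add_two ht⟩
end

section
/- Let m = 2^α p_1^{α_1} p_2^{α_2} ⋯ p_k^{α_k} be the prime factorization of an even number m ≥ 4, where p_1,…,p_k are distinct odd primes and α ≥ 1. Then the cycle C_m admits edge-magic labelings realizing at least α_1 + ⋯ + α_k mutually different valences; if moreover α ≥ 2, it admits edge-magic labelings realizing at least 1 + α_1 + ⋯ + α_k mutually different valences. -/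
/-!
Lift `C_q` along voltages `± a` in `ZMod (2 * a + 1)` whose sum over the cycle is a unit: the lift
is the single cycle `C_{n q}` with `n = 2 * a + 1`, and an edge-magic labeling of valence `k` lifts
to one of valence `n k - 3 a`. For every odd `n` such that `m / n` is an even number at least `4`,
lifting a labeling of `C_{m / n}` of the least possible valence `5 (m / n) / 2 + 2` yields the
valence `5 m / 2 + (n - 1) / 2 + 2` of `C_m`. These are distinct for distinct `n`, and the odd part
of `m` has more divisors than prime factors counted with multiplicity.
-/

/-- The set of valences of the edge-magic labelings of the graph with endpoint map `ends`. -/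
def edgeMagicValences {V E : Type} [Fintype V] [Fintype E] (ends : E → V × V) : Set ℕ :=
  {k | ∃ fv fe, IsEdgeMagic ends fv fe k}

section Labelings

variable {V E : Type} [Fintype V] [Fintype E]

theorem injective_and_range_eq_of_Icc_subset_range {α : Type*} [Fintype α] {f : α → ℕ}
    (hf : Set.Icc 1 (Fintype.card α) ⊆ Set.range f) :
    Function.Injective f ∧ Set.range f = Set.Icc 1 (Fintype.card α) := by
  have hsub : Finset.Icc 1 (Fintype.card α) ⊆ Finset.univ.image f := by
    intro l hl
    simpa using hf (Finset.mem_Icc.1 hl)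
  have himage : Finset.Icc 1 (Fintype.card α) = Finset.univ.image f :=
    Finset.eq_of_subset_of_card_le hsub (by simpa using Finset.card_image_le (s := Finset.univ))
  constructor
  · rw [← Set.injOn_univ, ← Finset.coe_univ, ← Finset.card_image_iff, ← himage]
    simp
  · rw [← Set.image_univ, ← Finset.coe_univ, ← Finset.coe_image, ← himage, Finset.coe_Icc]

/- The edge labels are forced to be `k - fv u - fv v`. As there are as many labels as vertices and
edges together, it is enough that every label is attained; distinctness is then automatic. -/
theorem mem_edgeMagicValences_of_forall_label {ends : E → V × V} {k : ℕ} (fv : V → ℕ)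
    (hcover : ∀ l ∈ Set.Icc 1 (Fintype.card V + Fintype.card E),
      (∃ v, fv v = l) ∨ ∃ e, fv (ends e).1 + l + fv (ends e).2 = k) :
    k ∈ edgeMagicValences ends := by
  set fe : E → ℕ := fun e => k - fv (ends e).1 - fv (ends e).2 with hfe
  have hrange : Set.Icc 1 (Fintype.card (V ⊕ E)) ⊆ Set.range (Sum.elim fv fe) := by
    intro l hl
    rw [Fintype.card_sum] at hl
    rcases hcover l hl with ⟨v, hv⟩ | ⟨e, he⟩
    · exact ⟨Sum.inl v, hv⟩
    · exact ⟨Sum.inr e, by simp only [Sum.elim_inr, hfe]; omega⟩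
  obtain ⟨hinj, heq⟩ := injective_and_range_eq_of_Icc_subset_range hrange
  rw [Fintype.card_sum] at heq
  refine ⟨fv, fe, hinj, heq, fun e => ?_⟩
  have hpos : 1 ≤ fe e := (heq.subset ⟨Sum.inr e, rfl⟩).1
  simp only [hfe] at hpos ⊢
  omega

theorem IsEdgeMagic.comp_equiv {V' E' : Type} [Fintype V'] [Fintype E'] {ends : E → V × V}
    {ends' : E' → V' × V'} {fv : V → ℕ} {fe : E → ℕ} {k : ℕ} (h : IsEdgeMagic ends fv fe k)
    (φ : V' ≃ V) (ψ : E' ≃ E)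
    (hends : ∀ e, ends (ψ e) = Prod.map φ φ (ends' e)) :
    IsEdgeMagic ends' (fv ∘ φ) (fe ∘ ψ) k := by
  obtain ⟨hinj, hrange, hsum⟩ := h
  have hcomp : Sum.elim (fv ∘ φ) (fe ∘ ψ) = Sum.elim fv fe ∘ Equiv.sumCongr φ ψ := by
    ext (v | e) <;> rfl
  refine ⟨?_, ?_, fun e => ?_⟩
  · rw [hcomp]
    exact hinj.comp (Equiv.injective _)
  · rw [hcomp, EquivLike.range_comp, hrange, Fintype.card_congr φ, Fintype.card_congr ψ]
  · simpa only [hends, Prod.map_fst, Prod.map_snd, Function.comp_apply] using hsum (ψ e)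

end Labelings

section VoltageLift

/-- The graph derived from the graph `ends` by the voltages `s`: an edge `e` from `u` to `v` lifts
to the edges from `(u, x)` to `(v, x + s e)`. -/
def voltageLift {V E G : Type*} [Add G] (ends : E → V × V) (s : E → G) :
    E × G → (V × G) × (V × G) :=
  fun p => (((ends p.1).1, p.2), ((ends p.1).2, p.2 + s p.1))

theorem exists_val_add_val_eq (a : ℕ) {u : ZMod (2 * a + 1)} (hu : u = a ∨ u = -a) {t : ℕ}
    (hat : a ≤ t) (hta : t ≤ 3 * a) :
    ∃ x : ZMod (2 * a + 1), x.val + (x + u).val = t := by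
  obtain ⟨x, y, hxy, hx, hy, rfl⟩ : ∃ x y : ℕ, ((x + a : ℕ) : ZMod (2 * a + 1)) = y ∧
      x < 2 * a + 1 ∧ y < 2 * a + 1 ∧ x + y = t := by
    obtain ⟨j, hj | hj⟩ : ∃ j, t = a + 2 * j ∨ t = a + 2 * j + 1 := ⟨(t - a) / 2, by omega⟩
    · exact ⟨j, j + a, rfl, by omega, by omega, by omega⟩
    · refine ⟨a + 1 + j, j, ?_, by omega, by omega, by omega⟩
      rw [show a + 1 + j + a = j + (2 * a + 1) by omega, Nat.cast_add, ZMod.natCast_self, add_zero]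
  rcases hu with rfl | rfl
  · exact ⟨x, by rw [← Nat.cast_add, hxy, ZMod.val_cast_of_lt hx, ZMod.val_cast_of_lt hy]⟩
  · refine ⟨y, ?_⟩
    rw [← hxy, Nat.cast_add, add_neg_cancel_right, ← Nat.cast_add, hxy, ZMod.val_cast_of_lt hx,
      ZMod.val_cast_of_lt hy, add_comm]

/- Vertex `(v, x)` gets the label `(2 * a + 1) * fv v - x`. Over an edge with label `l`, the sums
`x + (x + s e)` run through `a, …, 3 * a`, so its lifts get the block of `2 * a + 1` labels ending
at `(2 * a + 1) * l`. -/
theorem voltageLift_mem_edgeMagicValences {V E : Type} [Fintype V] [Fintype E]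
    {ends : E → V × V} {k a : ℕ} (hk : k ∈ edgeMagicValences ends) {s : E → ZMod (2 * a + 1)}
    (hs : ∀ e, s e = a ∨ s e = -a) :
    (2 * a + 1) * k - 3 * a ∈ edgeMagicValences (voltageLift ends s) := by
  obtain ⟨fv, fe, -, hrange, hsum⟩ := hk
  refine mem_edgeMagicValences_of_forall_label
    (fun p => (2 * a + 1) * fv p.1 - p.2.val) fun l' hl' => ?_
  obtain ⟨l, y, hl, hy, rfl⟩ : ∃ l y, l ∈ Set.Icc 1 (Fintype.card V + Fintype.card E) ∧
      y ≤ 2 * a ∧ (2 * a + 1) * l - y = l' := by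
    simp only [Fintype.card_prod, ZMod.card, ← add_mul, Set.mem_Icc] at hl'
    have hdiv : (l' - 1) / (2 * a + 1) < Fintype.card V + Fintype.card E :=
      Nat.div_lt_of_lt_mul (by rw [mul_comm]; omega)
    have hmod := Nat.mod_lt (l' - 1) (show 0 < 2 * a + 1 by omega)
    have hdivmod := Nat.div_add_mod (l' - 1) (2 * a + 1)
    refine ⟨(l' - 1) / (2 * a + 1) + 1, 2 * a - (l' - 1) % (2 * a + 1),
      ⟨Nat.le_add_left 1 _, hdiv⟩, Nat.sub_le _ _, ?_⟩
    rw [mul_add_one]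
    omega
  obtain ⟨v | e, rfl⟩ := hrange.superset hl
  · left
    exact ⟨(v, y), by simp only [Sum.elim_inl, ZMod.val_cast_of_lt (Nat.lt_succ_of_le hy)]⟩
  · right
    obtain ⟨x, hx⟩ := exists_val_add_val_eq a (hs e) (t := 3 * a - y) (by omega) (by omega)
    have hblock : ∀ z, 2 * a + 1 ≤ (2 * a + 1) * Sum.elim fv fe z := fun z =>
      Nat.le_mul_of_pos_right _ (hrange.subset ⟨z, rfl⟩).1
    have hleft := hblock (.inl (ends e).1)
    have hmid := hblock (.inr e)
    have hright := hblock (.inl (ends e).2)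
    have hxlt := ZMod.val_lt x
    have hxslt := ZMod.val_lt (x + s e)
    refine ⟨(e, x), ?_⟩
    rw [← hsum e, mul_add, mul_add]
    simp only [Sum.elim_inl, Sum.elim_inr, voltageLift] at hleft hmid hright ⊢
    omega

end VoltageLift

section Cycles

variable {V : Type*} [Fintype V] {π : Equiv.Perm V}

/-- The parametrization `i ↦ π ^ i v` of the orbit of `v` under a cyclic permutation `π`. -/
noncomputable def orbitEquiv (hπ : π.IsCycleOn Set.univ) (v : V) : Fin (Fintype.card V) ≃ V :=
  Equiv.ofBijective (fun i => (π ^ (i : ℕ)) v) <| by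
    rw [← Finset.coe_univ] at hπ
    refine (Fintype.bijective_iff_injective_and_card _).2 ⟨fun i j hij => Fin.ext ?_, by simp⟩
    exact Nat.ModEq.eq_of_lt_of_lt ((hπ.pow_apply_eq_pow_apply (Finset.mem_univ v)).1 hij) i.2 j.2

theorem sum_pow_apply_eq_sum {M : Type*} [AddCommMonoid M] (hπ : π.IsCycleOn Set.univ) (v : V)
    (s : V → M) : ∑ i ∈ Finset.range (Fintype.card V), s ((π ^ i) v) = ∑ w, s w := by
  rw [Finset.sum_range]
  exact (orbitEquiv hπ v).sum_comp s

theorem cycleEnds_mem_edgeMagicValences_of_isCycleOn {V : Type} [Fintype V] [Nonempty V]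
    {π : Equiv.Perm V} (hπ : π.IsCycleOn Set.univ) {k : ℕ}
    (hk : k ∈ edgeMagicValences fun v => (v, π v)) :
    k ∈ edgeMagicValences (cycleEnds (Fintype.card V)) := by
  obtain ⟨fv, fe, h⟩ := hk
  let v₀ := Classical.arbitrary V
  refine ⟨_, _, h.comp_equiv (orbitEquiv hπ v₀) (orbitEquiv hπ v₀) fun i => Prod.ext rfl ?_⟩
  change π ((π ^ (i : ℕ)) v₀) = (π ^ ((i + 1 : ℕ) % Fintype.card V)) v₀
  rw [← Finset.coe_univ] at hπ
  rw [← Equiv.Perm.mul_apply, ← pow_succ']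
  exact (hπ.pow_apply_eq_pow_apply (Finset.mem_univ v₀)).2 (Nat.mod_modEq _ _).symm

theorem cycleEnds_eq_addRight_one (m : ℕ) [NeZero m] :
    cycleEnds m = fun i => (i, Equiv.addRight 1 i) := by
  ext i <;> simp [cycleEnds, Fin.val_add]

theorem isCycleOn_addRight_one (m : ℕ) [NeZero m] :
    (Equiv.addRight (1 : Fin m)).IsCycleOn Set.univ := by
  refine ⟨Set.bijOn_univ.2 (Equiv.bijective _), fun i _ j _ => ⟨((j - i : Fin m) : ℕ), ?_⟩⟩
  open scoped Fin.CommRing in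
  simp

/-- The skew product of a permutation `π` with the translations by `s v`. If `π` is the successor
map of a cycle, it is the successor map of the voltage lift by `s`. -/
def skewProduct {V G : Type*} [AddGroup G] (π : Equiv.Perm V) (s : V → G) :
    Equiv.Perm (V × G) :=
  Equiv.prodShear π fun v => Equiv.addRight (s v)

theorem voltageLift_eq_skewProduct {V G : Type*} [AddGroup G] (π : Equiv.Perm V) (s : V → G) :
    voltageLift (fun v => (v, π v)) s = fun p => (p, skewProduct π s p) :=
  rfl

theorem skewProduct_pow_apply {V G : Type*} [AddCommGroup G] (π : Equiv.Perm V) (s : V → G)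
    (j : ℕ) (v : V) (x : G) :
    (skewProduct π s ^ j) (v, x) = ((π ^ j) v, x + ∑ i ∈ Finset.range j, s ((π ^ i) v)) := by
  induction j with
  | zero => simp
  | succ j ih =>
    rw [pow_succ', Equiv.Perm.mul_apply, ih, Finset.sum_range_succ, ← add_assoc, pow_succ']
    rfl

theorem skewProduct_pow_card_mul_apply {G : Type*} [AddCommGroup G]
    (hπ : π.IsCycleOn Set.univ) (s : V → G) (c : ℕ) (v : V) (x : G) :
    (skewProduct π s ^ (Fintype.card V * c)) (v, x) = (v, x + c • ∑ w, s w) := by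
  have hcard : (π ^ Fintype.card V) v = v :=
    (Finset.coe_univ (α := V) ▸ hπ).pow_card_apply (Finset.mem_univ v)
  induction c with
  | zero => simp
  | succ c ih =>
    rw [mul_add_one, add_comm, pow_add, Equiv.Perm.mul_apply, ih, skewProduct_pow_apply,
      sum_pow_apply_eq_sum hπ, hcard, add_assoc, ← succ_nsmul]

theorem isCycleOn_skewProduct {G : Type*} [AddCommGroup G] (hπ : π.IsCycleOn Set.univ)
    {s : V → G} (hs : ∀ x, x ∈ AddSubmonoid.multiples (∑ v, s v)) :
    (skewProduct π s).IsCycleOn Set.univ := by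
  refine ⟨Set.bijOn_univ.2 (Equiv.bijective _), fun ⟨v, x⟩ _ ⟨w, y⟩ _ => ?_⟩
  obtain ⟨j, rfl⟩ := hπ.exists_pow_eq' Set.finite_univ (Set.mem_univ v) (Set.mem_univ w)
  set x' := x + ∑ i ∈ Finset.range j, s ((π ^ i) v) with hx'
  obtain ⟨c, hc : c • ∑ v, s v = y - x'⟩ := hs (y - x')
  refine ⟨(Fintype.card V * c + j : ℕ), ?_⟩
  rw [zpow_natCast, pow_add, Equiv.Perm.mul_apply, skewProduct_pow_apply π s j, ← hx',
    skewProduct_pow_card_mul_apply hπ, hc, add_sub_cancel]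

theorem mem_multiples_of_isUnit {n : ℕ} [NeZero n] {u : ZMod n} (hu : IsUnit u)
    (x : ZMod n) : x ∈ AddSubmonoid.multiples u :=
  ⟨(x * u⁻¹).val, by
    simp only [nsmul_eq_mul, ZMod.natCast_zmod_val]
    rw [mul_assoc, ZMod.inv_mul_of_unit u hu, mul_one]⟩

theorem exists_isUnit_signed_sum (V : Type*) [Fintype V] [Nonempty V] (a : ℕ) :
    ∃ s : V → ZMod (2 * a + 1), (∀ v, s v = a ∨ s v = -a) ∧ IsUnit (∑ v, s v) := by
  classical
  obtain ⟨T, -, hT⟩ := Finset.exists_subset_card_eq (s := (Finset.univ : Finset V))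
    (n := (Fintype.card V - 1) / 2) (by rw [Finset.card_univ]; omega)
  have htwo : 2 * (a : ZMod (2 * a + 1)) = -1 := by
    rw [eq_neg_iff_add_eq_zero]
    exact_mod_cast ZMod.natCast_self (2 * a + 1)
  have hcard : Fintype.card V = T.card + Tᶜ.card := (Finset.card_add_card_compl T).symm
  have hpos : 0 < Fintype.card V := Fintype.card_pos
  have hsum : ∑ v, (if v ∈ T then -(a : ZMod (2 * a + 1)) else a) =
      ((Tᶜ.card : ZMod (2 * a + 1)) - T.card) * a := by
    rw [← Finset.sum_add_sum_compl T, Finset.sum_congr rfl fun v hv => if_pos hv,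
      Finset.sum_congr rfl fun v hv => if_neg (Finset.mem_compl.1 hv)]
    simp only [Finset.sum_const, nsmul_eq_mul]
    ring
  refine ⟨fun v => if v ∈ T then -a else a, fun v => (ite_eq_or_eq _ _ _).symm, ?_⟩
  rw [hsum]
  obtain h | h : Tᶜ.card = T.card + 1 ∨ Tᶜ.card = T.card + 2 := by omega
  · refine IsUnit.of_mul_eq_one (-2) ?_
    rw [h]
    push_cast
    linear_combination -htwo
  · refine IsUnit.of_mul_eq_one (-1) ?_
    rw [h]
    push_cast
    linear_combination -htwo

theorem odd_mul_mem_edgeMagicValences_cycleEnds {q k : ℕ} [NeZero q]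
    (hk : k ∈ edgeMagicValences (cycleEnds q)) (a : ℕ) :
    (2 * a + 1) * k - 3 * a ∈ edgeMagicValences (cycleEnds ((2 * a + 1) * q)) := by
  obtain ⟨s, hs, hunit⟩ := exists_isUnit_signed_sum (Fin q) a
  have hgen := mem_multiples_of_isUnit hunit
  have hcycle := isCycleOn_skewProduct (isCycleOn_addRight_one q) hgen
  rw [cycleEnds_eq_addRight_one] at hk
  have hlift := voltageLift_mem_edgeMagicValences hk hs
  rw [voltageLift_eq_skewProduct] at hlift
  replace hlift := cycleEnds_mem_edgeMagicValences_of_isCycleOn hcycle hlift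
  rwa [Fintype.card_prod, Fintype.card_fin, ZMod.card, mul_comm q] at hlift

end Cycles

section MinimalValence

theorem cycleEnds_mem_edgeMagicValences_of_forall_label {m k : ℕ} (f : ℕ → ℕ)
    (hcover : ∀ l, 1 ≤ l → l ≤ 2 * m → (∃ p < m, f p = l) ∨
      (∃ p, p + 1 < m ∧ f p + l + f (p + 1) = k) ∨ f (m - 1) + l + f 0 = k) :
    k ∈ edgeMagicValences (cycleEnds m) := by
  refine mem_edgeMagicValences_of_forall_label (fun i => f i) fun l ⟨hl, hlm⟩ => ?_
  rw [Fintype.card_fin, ← two_mul] at hlm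
  rcases hcover l hl hlm with ⟨p, hp, hpl⟩ | ⟨p, hp, hpl⟩ | hpl
  · exact Or.inl ⟨⟨p, hp⟩, hpl⟩
  · exact Or.inr ⟨⟨p, by omega⟩, by simpa [cycleEnds, Nat.mod_eq_of_lt hp] using hpl⟩
  · exact Or.inr ⟨⟨m - 1, by omega⟩, by
      simpa [cycleEnds, Nat.sub_add_cancel (show 1 ≤ m by omega)] using hpl⟩

/-- The sequence `x, y, x + 1, y + 1, x + 2, y + 2, …`; its adjacent sums are consecutive. -/
def zigzag (x y p : ℕ) : ℕ :=
  if p % 2 = 0 then x + p / 2 else y + p / 2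

/-- The vertex labels of an edge-magic labeling of `C_{4 * r}` with valence `10 * r + 2`. Inside
each of the two zigzags the adjacent sums are consecutive; the sums at the joints and at the last
two vertices are chosen to supply exactly the labels that these two runs leave out. -/
def labelFourMul (r p : ℕ) : ℕ :=
  if p < 2 * r - 1 then zigzag 2 (2 * r + 2) p
  else if p < 4 * r - 2 then zigzag (2 * r + 1) 3 p
  else if p = 4 * r - 2 then 1 else 6 * r

/-- The vertex labels of an edge-magic labeling of `C_{4 * r + 2}` with valence `10 * r + 7`, built
on the same pattern as `labelFourMul`. -/
def labelFourMulAddTwo (r p : ℕ) : ℕ :=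
  if p < 2 * r + 1 then zigzag 1 (2 * r + 3) p
  else if p < 4 * r + 1 then zigzag (2 * r + 2) 2 p
  else 4 * r + 3

theorem ten_mul_add_two_mem_edgeMagicValences {r : ℕ} (hr : 1 ≤ r) :
    10 * r + 2 ∈ edgeMagicValences (cycleEnds (4 * r)) := by
  refine cycleEnds_mem_edgeMagicValences_of_forall_label (labelFourMul r) fun l hl hlr => ?_
  simp only [labelFourMul, zigzag]
  by_cases hvertex : l < 4 * r ∨ l = 6 * r
  · left
    obtain ⟨p, hp⟩ : ∃ p, p = if l = 1 then 4 * r - 2 else if l ≤ r + 1 then 2 * (l - 2)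
      else if l ≤ 2 * r + 1 then 2 * l - 5 else if l ≤ 3 * r then 2 * (l - 2 * r - 2) + 1
      else if l < 4 * r then 2 * (l - 2 * r - 1) else 4 * r - 1 := ⟨_, rfl⟩
    refine ⟨p, ?_⟩
    split_ifs at hp <;> split_ifs <;> omega
  · right
    by_cases hclosing : l = 4 * r
    · right
      split_ifs <;> omega
    · left
      obtain ⟨p, hp⟩ : ∃ p, p = if l = 4 * r + 1 then 4 * r - 2 else if l = 8 * r then 4 * r - 3
        else if l = 8 * r - 1 then 2 * r - 2 else 8 * r - 2 - l := ⟨_, rfl⟩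
      refine ⟨p, ?_⟩
      split_ifs at hp <;> split_ifs <;> omega

theorem ten_mul_add_seven_mem_edgeMagicValences {r : ℕ} (hr : 1 ≤ r) :
    10 * r + 7 ∈ edgeMagicValences (cycleEnds (4 * r + 2)) := by
  refine cycleEnds_mem_edgeMagicValences_of_forall_label (labelFourMulAddTwo r) fun l hl hlr => ?_
  simp only [labelFourMulAddTwo, zigzag]
  by_cases hvertex : l ≠ 2 * r + 2 ∧ l ≤ 4 * r + 3
  · left
    obtain ⟨p, hp⟩ : ∃ p, p = if l ≤ r + 1 then 2 * (l - 1) else if l ≤ 2 * r + 1 then 2 * l - 3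
      else if l ≤ 3 * r + 2 then 2 * (l - 2 * r - 3) + 1
      else if l ≤ 4 * r + 2 then 2 * (l - 2 * r - 2) else 4 * r + 1 := ⟨_, rfl⟩
    refine ⟨p, ?_⟩
    split_ifs at hp <;> split_ifs <;> omega
  · right
    by_cases hclosing : l = 6 * r + 3
    · right
      split_ifs <;> omega
    · left
      obtain ⟨p, hp⟩ : ∃ p, p = if l = 2 * r + 2 then 4 * r else if l = 8 * r + 4 then 2 * r
        else 8 * r + 3 - l := ⟨_, rfl⟩
      refine ⟨p, ?_⟩
      split_ifs at hp <;> split_ifs <;> omega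

theorem five_mul_add_two_mem_edgeMagicValences {h : ℕ} (hh : 2 ≤ h) :
    5 * h + 2 ∈ edgeMagicValences (cycleEnds (2 * h)) := by
  obtain ⟨r, rfl | rfl⟩ := h.even_or_odd'
  · rw [show 5 * (2 * r) + 2 = 10 * r + 2 by ring, show 2 * (2 * r) = 4 * r by ring]
    exact ten_mul_add_two_mem_edgeMagicValences (by omega)
  · rw [show 5 * (2 * r + 1) + 2 = 10 * r + 7 by ring, show 2 * (2 * r + 1) = 4 * r + 2 by ring]
    exact ten_mul_add_seven_mem_edgeMagicValences (by omega)

end MinimalValence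

section Divisors

theorem cardFactors_lt_card_divisors {n : ℕ} (hn : n ≠ 0) :
    ArithmeticFunction.cardFactors n < n.divisors.card := by
  induction n using induction_on_primes with
  | zero => exact absurd rfl hn
  | one => simp
  | prime_mul p n hp ih =>
    have hn0 : n ≠ 0 := right_ne_zero_of_mul hn
    have hss : n.divisors ⊂ (p * n).divisors := by
      refine (Finset.ssubset_iff_of_subset (Nat.divisors_subset_of_dvd hn (Dvd.intro_left p rfl))).2
        ⟨p * n, Nat.mem_divisors_self _ hn, fun hmem => ?_⟩
      have := Nat.divisor_le hmem
      nlinarith [hp.two_le, Nat.pos_of_ne_zero hn0]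
    rw [ArithmeticFunction.cardFactors_mul hp.ne_zero hn0,
      ArithmeticFunction.cardFactors_apply_prime hp]
    have := Finset.card_lt_card hss
    have := ih hn0
    omega

theorem sum_factorization_sub_eq_cardFactors_ordCompl (n : ℕ) {p : ℕ} (hp : p.Prime) :
    (n.factorization.sum fun _ e => e) - n.factorization p =
      ArithmeticFunction.cardFactors (ordCompl[p] n) := by
  rcases eq_or_ne n 0 with rfl | hn
  · simp
  have hmul := ArithmeticFunction.cardFactors_mul (pow_ne_zero (n.factorization p) hp.ne_zero)
    (Nat.ordCompl_pos p hn).ne'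
  rw [Nat.ordProj_mul_ordCompl_eq_self, ArithmeticFunction.cardFactors_apply_prime_pow hp] at hmul
  rw [← ArithmeticFunction.cardFactors_eq_sum_factorization, hmul, Nat.add_sub_cancel_left]

theorem pow_mul_dvd_of_dvd_ordCompl {m n p j : ℕ} (hj : j ≤ m.factorization p)
    (hn : n ∣ ordCompl[p] m) : p ^ j * n ∣ m :=
  calc p ^ j * n ∣ ordProj[p] m * ordCompl[p] m := mul_dvd_mul (pow_dvd_pow p hj) hn
    _ = m := Nat.ordProj_mul_ordCompl_eq_self m p

theorem mem_edgeMagicValences_cycleEnds_of_odd_divisor {m n : ℕ} (hn : Odd n)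
    (h2n : 2 * n ∈ m.properDivisors) :
    5 * (m / 2) + n / 2 + 2 ∈ edgeMagicValences (cycleEnds m) := by
  obtain ⟨a, rfl⟩ := hn
  obtain ⟨⟨h, rfl⟩, hlt⟩ := Nat.mem_properDivisors.1 h2n
  have hh : 2 ≤ h := (Nat.lt_mul_iff_one_lt_right (by omega)).1 hlt
  have : NeZero (2 * h) := ⟨by omega⟩
  have hk := odd_mul_mem_edgeMagicValences_cycleEnds (five_mul_add_two_mem_edgeMagicValences hh) a
  rw [show (2 * a + 1) * (2 * h) = 2 * (2 * a + 1) * h by ring] at hk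
  convert hk using 1
  rw [mul_assoc 2, Nat.mul_div_cancel_left _ two_pos, mul_add, mul_left_comm 5]
  omega

theorem exists_valences_of_dvd_ordCompl_two {m : ℕ} (heven : 2 ∣ m) (D : Finset ℕ)
    (hD : ∀ n ∈ D, n ∣ ordCompl[2] m ∧ 2 * n < m) :
    ∃ S : Finset ℕ, S.card = D.card ∧ ∀ k ∈ S, k ∈ edgeMagicValences (cycleEnds m) := by
  have hm0 {n : ℕ} (hn : n ∈ D) : m ≠ 0 := (pos_of_gt (hD n hn).2).ne'
  have hodd {n : ℕ} (hn : n ∈ D) : Odd n := Nat.coprime_two_left.1 <|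
    (Nat.coprime_ordCompl Nat.prime_two (hm0 hn)).coprime_dvd_right (hD n hn).1
  refine ⟨D.image fun n => 5 * (m / 2) + n / 2 + 2, Finset.card_image_of_injOn ?_, ?_⟩
  · intro x hx y hy hxy
    have hxodd := Nat.odd_iff.1 (hodd hx)
    have hyodd := Nat.odd_iff.1 (hodd hy)
    simp only at hxy
    omega
  · rw [Finset.forall_mem_image]
    intro n hn
    have h2 : 1 ≤ m.factorization 2 := Nat.prime_two.factorization_pos_of_dvd (hm0 hn) heven
    have hdvd : 2 * n ∣ m := pow_mul_dvd_of_dvd_ordCompl h2 (hD n hn).1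
    exact mem_edgeMagicValences_cycleEnds_of_odd_divisor (hodd hn)
      (Nat.mem_properDivisors.2 ⟨hdvd, (hD n hn).2⟩)

end Divisors

/-- for even m ≥ 4 with m = 2^α·p₁^{α₁}⋯p_k^{α_k}
(α = m.factorization 2, α₁+⋯+α_k = Ω(m) - α), the cycle C_m admits at least
α₁+⋯+α_k mutually different edge-magic valences, and at least
1+α₁+⋯+α_k of them when α ≥ 2. -/
theorem evenCycle_valences_lowerBound (m : ℕ) (hm : 4 ≤ m) (heven : 2 ∣ m) :
    (∃ S : Finset ℕ,
      (m.factorization.sum fun _ e => e) - m.factorization 2 ≤ S.card ∧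
      ∀ k ∈ S, ∃ fv fe, IsEdgeMagic (cycleEnds m) fv fe k) ∧
    (2 ≤ m.factorization 2 →
      ∃ S : Finset ℕ,
        (m.factorization.sum fun _ e => e) - m.factorization 2 + 1 ≤ S.card ∧
        ∀ k ∈ S, ∃ fv fe, IsEdgeMagic (cycleEnds m) fv fe k) := by
  set w := ordCompl[2] m with hw
  have hw0 : 0 < w := Nat.ordCompl_pos 2 (by omega)
  have hΩ := cardFactors_lt_card_divisors hw0.ne'
  have hle {j : ℕ} (hj : j ≤ m.factorization 2) : 2 ^ j * w ≤ m :=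
    Nat.le_of_dvd (by omega) (pow_mul_dvd_of_dvd_ordCompl hj dvd_rfl)
  rw [sum_factorization_sub_eq_cardFactors_ordCompl m Nat.prime_two, ← hw]
  refine ⟨?_, fun hα2 => ?_⟩
  · have h2w := hle (Nat.prime_two.factorization_pos_of_dvd (by omega) heven)
    rw [← Nat.cons_self_properDivisors hw0.ne', Finset.card_cons, Nat.lt_succ_iff] at hΩ
    obtain ⟨S, hcard, hS⟩ := exists_valences_of_dvd_ordCompl_two heven w.properDivisors fun n hn =>
      have ⟨hnw, hlt⟩ := Nat.mem_properDivisors.1 hn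
      ⟨hnw, by omega⟩
    exact ⟨S, hcard ▸ hΩ, hS⟩
  · have h4w := hle hα2
    obtain ⟨S, hcard, hS⟩ := exists_valences_of_dvd_ordCompl_two heven w.divisors fun n hn =>
      have hnw := Nat.dvd_of_mem_divisors hn
      have := Nat.le_of_dvd hw0 hnw
      ⟨hnw, by omega⟩
    exact ⟨S, hcard ▸ hΩ, hS⟩
end
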